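/- arXiv:1707.08210 — 2 statements merged into one kernel-verified Lean document; each statement's English description precedes it below -/
import Mathlib

section
/- Let ε₁ = (√3·α₁/2)³, where α₁ is the smallest modulus of a zero of U₋ on the open ray arg z = π/3. For every ε > ε₁ the model operator T(ε) has at least one non-real eigenvalue, i.e. there exists λ ∈ ℂ with Im λ ≠ 0 and W(ε,λ) = 0. (After the first collision at ε = ε₁ the eigenvalues that leave the real axis never return to it.) -/
open Complex MeasureTheory Real

noncomputable section

/-- `w` is an entire solution of the Airy equation `w'' = z·w`
with prescribed (real) values of `w` and `w'` at the origin. -/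
def IsAiry (w : ℂ → ℂ) (w0 w0' : ℝ) : Prop :=
  Differentiable ℂ w ∧ Differentiable ℂ (deriv w) ∧
  (∀ z : ℂ, deriv (deriv w) z = z * w z) ∧
  w 0 = (w0 : ℂ) ∧ deriv w 0 = (w0' : ℂ)

/-- `Ai` is the standard Airy function of the first kind. -/
def IsAiryAi (Ai : ℂ → ℂ) : Prop :=
  IsAiry Ai ((3 : ℝ) ^ (-(2 : ℝ)/3) / Real.Gamma (2/3))
    (-((3 : ℝ) ^ (-(1 : ℝ)/3)) / Real.Gamma (1/3))

/-- `Bi` is the standard Airy function of the second kind. -/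
def IsAiryBi (Bi : ℂ → ℂ) : Prop :=
  IsAiry Bi ((3 : ℝ) ^ (-(1 : ℝ)/6) / Real.Gamma (2/3))
    ((3 : ℝ) ^ ((1 : ℝ)/6) / Real.Gamma (1/3))

/-- `U₋ = -√3·Ai + Bi`. -/
def Uminus (Ai Bi : ℂ → ℂ) : ℂ → ℂ := fun z => -(Real.sqrt 3 : ℂ) * Ai z + Bi z

/-- `U₊ = √3·Ai + Bi`. -/
def Uplus (Ai Bi : ℂ → ℂ) : ℂ → ℂ := fun z => (Real.sqrt 3 : ℂ) * Ai z + Bi z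

/-- The moduli of the zeros of `U` on the open ray `arg z = π/3`. -/
def rayZeroModuli (U : ℂ → ℂ) : Set ℝ :=
  {r : ℝ | 0 < r ∧ U ((r : ℂ) * Complex.exp ((π/3 : ℝ) * Complex.I)) = 0}

/-- The characteristic determinant `W(ε,λ)` of the model problem
`-ε⁻¹ y'' + i x y = λ y`, `y(-1) = y(1) = 0`. -/
def airyW (Ai Bi : ℂ → ℂ) (ε : ℝ) (lam : ℂ) : ℂ :=
  Ai ((ε ^ ((1:ℝ)/3) : ℝ) * (lam + Complex.I)) * Bi ((ε ^ ((1:ℝ)/3) : ℝ) * (lam - Complex.I))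
  - Ai ((ε ^ ((1:ℝ)/3) : ℝ) * (lam - Complex.I)) * Bi ((ε ^ ((1:ℝ)/3) : ℝ) * (lam + Complex.I))

/-!
Put `s = ε^{1/3}` and `z = s λ`. Up to a constant the characteristic function becomes
`H(s, z) = i (U₊(z + is) U₋(z - is) - U₊(z - is) U₋(z + is))`, which is entire of minimal
exponential type in `z` and real on the real axis. With `M = ∂_s H` it satisfies
`H''' = 2 H + 4 z H' - 2 s M` and `M' = -2 s H`, primes being derivatives in `z`.

If all zeros of `H(s, ·)` are real, then `H(s, ·)` is a locally uniform limit of real-rooted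
polynomials, so Laguerre's inequalities hold for its derivatives. At a real double zero, the
third-order equation turns them into the sign condition `H'' M > 0`: as `s` increases, a double
zero dissolves into a pair of conjugate zeros and can never be the place where such a pair returns
to the axis. Non-real zeros are bounded locally uniformly in `s`, by comparison of the
eigenfunctions with sines, so they cannot escape to infinity either. Hence once a double zero has
occurred, non-real zeros persist.

A zero of `U₋` on the ray `arg z = π/3` of modulus `α` produces a double zero of `H(s, ·)` at
`z = α/2` for `s = √3 α/2`, because `U₊` is invariant under rotation by `2π/3` and `U₋` is
multiplied by the rotation.
-/

open Filter Topology Set ComplexConjugate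

section RealRootedPolynomials

open Polynomial

lemma eval_mul_eval_derivative_derivative_le_sq_of_splits {K : Type*} [Field K] [LinearOrder K]
    [IsStrictOrderedRing K] {p : K[X]} (hp : p.Splits) (x : K) :
    p.eval x * (derivative (derivative p)).eval x ≤ (derivative p).eval x ^ 2 := by
  suffices h : ∀ s : Multiset K, ∀ q, q = (s.map (X - C ·)).prod →
      q.eval x * (derivative (derivative q)).eval x ≤ (derivative q).eval x ^ 2 by
    rw [hp.eq_prod_roots]
    simp only [derivative_C_mul, eval_C_mul]
    nlinarith [h p.roots _ rfl, sq_nonneg p.leadingCoeff]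
  intro s
  induction s using Multiset.induction with
  | empty => rintro q rfl; simp
  | cons a s ih =>
    rintro q rfl
    set q := (s.map (X - C ·)).prod
    simp only [Multiset.map_cons, Multiset.prod_cons, derivative_mul, derivative_sub, derivative_X,
      derivative_C, derivative_add, eval_add, eval_mul, eval_sub, eval_X, eval_C, sub_zero, one_mul]
    nlinarith [ih q rfl, sq_nonneg (q.eval x), sq_nonneg (x - a)]

lemma splits_derivative {p : ℝ[X]} (hp : p.Splits) : (derivative p).Splits := by
  rw [splits_iff_card_roots] at hp ⊢
  have hroots := card_roots_le_derivative p
  have hdegree := natDegree_derivative p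
  exact le_antisymm (card_roots' _) (by omega)

end RealRootedPolynomials

section LaguerrePolya

variable {f : ℂ → ℂ}

lemma tendstoLocallyUniformly_aeval_derivative {ι : Type*} {l : Filter ι} [l.NeBot]
    {p : ι → Polynomial ℝ} (h : TendstoLocallyUniformly (fun n z => (p n).aeval z) f l) :
    TendstoLocallyUniformly (fun n z => (p n).derivative.aeval z) (deriv f) l := by
  rw [← tendstoLocallyUniformlyOn_univ] at h ⊢
  have hp : ∀ n, DifferentiableOn ℂ (fun z => (p n).aeval z) univ :=
    fun n => (p n).differentiable_aeval.differentiableOn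
  exact (h.deriv (.of_forall hp) isOpen_univ).congr fun n z _ => (p n).deriv_aeval

/-- The Laguerre–Pólya class: locally uniform limits on `ℂ` of real polynomials all of whose zeros
are real. -/
def IsLaguerrePolya (f : ℂ → ℂ) : Prop :=
  ∃ p : ℕ → Polynomial ℝ, (∀ n, (p n).Splits) ∧
    TendstoLocallyUniformly (fun n z => (p n).aeval z) f atTop

namespace IsLaguerrePolya

lemma deriv (hf : IsLaguerrePolya f) : IsLaguerrePolya (deriv f) := by
  obtain ⟨p, hp, hpf⟩ := hf
  exact ⟨fun n => (p n).derivative, fun n => splits_derivative (hp n),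
    tendstoLocallyUniformly_aeval_derivative hpf⟩

lemma comp_add_const (hf : IsLaguerrePolya f) (a : ℝ) : IsLaguerrePolya fun z => f (z + a) := by
  obtain ⟨p, hp, hpf⟩ := hf
  refine ⟨fun n => (p n).comp (Polynomial.X + Polynomial.C a), fun n => (hp n).comp_X_add_C a, ?_⟩
  refine (hpf.comp (fun z : ℂ => z + a) (by fun_prop)).congr fun n z => ?_
  simp [Polynomial.aeval_comp]

lemma const_mul (hf : IsLaguerrePolya f) (a : ℝ) : IsLaguerrePolya fun z => a * f z := by
  obtain ⟨p, hp, hpf⟩ := hf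
  refine ⟨fun n => Polynomial.C a * p n, fun n => (hp n).C_mul a, ?_⟩
  have hmul : UniformContinuous fun w : ℂ => (a : ℂ) * w := uniformContinuous_const_smul (a : ℂ)
  exact (hmul.comp_tendstoLocallyUniformly hpf).congr fun n z => by simp

lemma re_mul_re_deriv_deriv_le_sq (hf : IsLaguerrePolya f) (x : ℝ) :
    (f x).re * (_root_.deriv (_root_.deriv f) x).re ≤ (_root_.deriv f x).re ^ 2 := by
  obtain ⟨p, hp, h₀⟩ := hf
  have h₁ := tendstoLocallyUniformly_aeval_derivative h₀
  have h₂ := tendstoLocallyUniformly_aeval_derivative h₁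
  have hre {q : ℕ → Polynomial ℝ} {g : ℂ → ℂ}
      (h : TendstoLocallyUniformly (fun n z => (q n).aeval z) g atTop) :
      Tendsto (fun n => (q n).eval x) atTop (𝓝 (g x).re) := by
    have := ((tendstoLocallyUniformlyOn_univ.2 h).tendsto_at (mem_univ (x : ℂ)))
    refine ((Complex.continuous_re.tendsto _).comp this).congr fun n => ?_
    exact congrArg re (Polynomial.aeval_ofReal (K := ℂ) (q n) x)
  exact le_of_tendsto_of_tendsto' ((hre h₀).mul (hre h₂)) ((hre h₁).pow 2) fun n =>
    eval_mul_eval_derivative_derivative_le_sq_of_splits (hp n) x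

end IsLaguerrePolya
end LaguerrePolya

section EntireFactorization

variable {f : ℂ → ℂ} {R : ℝ}

lemma pow_card_le_norm_prod_one_sub_div {s : Multiset ℂ} (hs : ∀ a ∈ s, a ≠ 0 ∧ ‖a‖ ≤ R)
    {c : ℝ} (hc : 0 ≤ c) {z : ℂ} (hz : ‖z‖ = (c + 1) * R) :
    c ^ s.card ≤ ‖(s.map fun a => 1 - z / a).prod‖ := by
  induction s using Multiset.induction with
  | empty => simp
  | cons a s ih =>
    have ih := ih fun b hb => hs b (Multiset.mem_cons_of_mem hb)
    obtain ⟨ha, haR⟩ := hs a (Multiset.mem_cons_self a s)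
    have hfactor : c ≤ ‖1 - z / a‖ := by
      have hza : c + 1 ≤ ‖z / a‖ := by
        rw [norm_div, hz, le_div_iff₀ (norm_pos_iff.2 ha)]
        gcongr
      have := norm_sub_norm_le (z / a) 1
      rw [norm_one, norm_sub_rev] at this
      linarith
    rw [Multiset.map_cons, Multiset.prod_cons, Multiset.card_cons, pow_succ', norm_mul]
    gcongr

lemma norm_le_of_forall_norm_eq_norm_le {h : ℂ → ℂ} (hh : Differentiable ℂ h) {B : ℝ}
    (hB : ∀ z, ‖z‖ = R → ‖h z‖ ≤ B) {z : ℂ} (hz : ‖z‖ ≤ R) : ‖h z‖ ≤ B := by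
  rcases hz.eq_or_lt with hz | hz
  · exact hB z hz
  have hR : R ≠ 0 := ((norm_nonneg z).trans_lt hz).ne'
  refine Complex.norm_le_of_forall_mem_frontier_norm_le (U := Metric.ball 0 R)
    Metric.isBounded_ball hh.diffContOnCl (fun w hw => hB w ?_) (subset_closure (by simpa using hz))
  simpa [frontier_ball _ hR] using hw

/-- `IsZeroFactorization f R s h` says that `s` lists zeros of `f` of modulus at most `R` (with
repetitions, none of them `0`) and that `h` is the entire function left after dividing them out,
normalized so that the linear factors take the value `1` at the origin. -/
structure IsZeroFactorization (f : ℂ → ℂ) (R : ℝ) (s : Multiset ℂ) (h : ℂ → ℂ) : Prop where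
  ne_zero : ∀ a ∈ s, a ≠ 0
  norm_le : ∀ a ∈ s, ‖a‖ ≤ R
  eq_zero : ∀ a ∈ s, f a = 0
  differentiable : Differentiable ℂ h
  eq_prod_mul : ∀ z, f z = (s.map fun a => 1 - z / a).prod * h z

namespace IsZeroFactorization

variable {s : Multiset ℂ} {h : ℂ → ℂ}

lemma apply_zero (H : IsZeroFactorization f R s h) : h 0 = f 0 := by
  simp [H.eq_prod_mul 0]

lemma norm_quotient_le (H : IsZeroFactorization f R s h) {c B : ℝ} (hc : 0 < c)
    (hB : ∀ z, ‖z‖ ≤ (c + 1) * R → ‖f z‖ ≤ B) {z : ℂ} (hz : ‖z‖ ≤ (c + 1) * R) :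
    ‖h z‖ ≤ B / c ^ s.card := by
  refine norm_le_of_forall_norm_eq_norm_le H.differentiable (fun w hw => ?_) hz
  have hprod := pow_card_le_norm_prod_one_sub_div
    (fun a ha => ⟨H.ne_zero a ha, H.norm_le a ha⟩) hc.le hw
  rw [le_div_iff₀ (by positivity), mul_comm]
  calc c ^ s.card * ‖h w‖ ≤ ‖(s.map fun a => 1 - w / a).prod‖ * ‖h w‖ := by gcongr
    _ = ‖f w‖ := by rw [H.eq_prod_mul w, norm_mul]
    _ ≤ B := hB w hw.le

lemma exists_cons (H : IsZeroFactorization f R s h) {a : ℂ} (ha₀ : a ≠ 0) (haR : ‖a‖ ≤ R)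
    (ha : h a = 0) : ∃ g, IsZeroFactorization f R (a ::ₘ s) g := by
  refine ⟨fun z => -a * dslope h a z, ?_, ?_, ?_, ?_, fun z => ?_⟩
  · simpa using ⟨ha₀, H.ne_zero⟩
  · simpa using ⟨haR, H.norm_le⟩
  · simpa using ⟨by rw [H.eq_prod_mul, ha, mul_zero], H.eq_zero⟩
  · have hslope : Differentiable ℂ (dslope h a) := by
      rw [← differentiableOn_univ, Complex.differentiableOn_dslope univ_mem]
      exact H.differentiable.differentiableOn
    fun_prop
  · have hslope := sub_smul_dslope h a z
    rw [ha, sub_zero, smul_eq_mul] at hslope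
    rw [H.eq_prod_mul z, Multiset.map_cons, Multiset.prod_cons, ← hslope]
    field_simp
    ring

end IsZeroFactorization

lemma exists_isZeroFactorization_forall_ne_zero (hf : Differentiable ℂ f) (hf₀ : f 0 ≠ 0)
    (hR : 0 ≤ R) : ∃ s h, IsZeroFactorization f R s h ∧ ∀ z, ‖z‖ ≤ R → h z ≠ 0 := by
  let cards : Set ℕ := {n | ∃ s h, s.card = n ∧ IsZeroFactorization f R s h}
  have hcards : cards.Nonempty := ⟨0, 0, f, rfl, by simp, by simp, by simp, hf, by simp⟩
  have hbdd : BddAbove cards := by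
    obtain ⟨B, hB⟩ := (isCompact_closedBall (0 : ℂ) ((2 + 1) * R)).exists_bound_of_continuousOn
      hf.continuous.continuousOn
    refine ⟨⌈B / ‖f 0‖⌉₊, ?_⟩
    rintro _ ⟨s, h, rfl, H⟩
    have hle := H.norm_quotient_le two_pos (fun z hz => hB z (by simpa using hz)) (z := 0)
      (by simpa using by positivity)
    rw [H.apply_zero, le_div_iff₀ (by positivity), mul_comm,
      ← le_div_iff₀ (norm_pos_iff.2 hf₀)] at hle
    have hpow : (s.card : ℝ) ≤ 2 ^ s.card := by exact_mod_cast Nat.lt_two_pow_self.le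
    exact_mod_cast (hpow.trans hle).trans (Nat.le_ceil _)
  obtain ⟨s, h, hcard, H⟩ := Nat.sSup_mem hcards hbdd
  refine ⟨s, h, H, fun z hz hz₀ => ?_⟩
  have hz_ne : z ≠ 0 := by
    rintro rfl
    exact hf₀ (H.apply_zero ▸ hz₀)
  obtain ⟨g, hg⟩ := H.exists_cons hz_ne hz hz₀
  have := le_csSup hbdd ⟨_, g, rfl, hg⟩
  rw [Multiset.card_cons, hcard] at this
  omega

end EntireFactorization

section MinimalType

/-- `f` is of minimal exponential type: `f z = O(exp (c * ‖z‖))` for every `c > 0`. For continuous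
`f` a bound near infinity is a bound on all of `ℂ`, which is why the filter is `⊤`. -/
def IsMinimalType (f : ℂ → ℂ) : Prop :=
  ∀ c > 0, f =O[⊤] fun z => Real.exp (c * ‖z‖)

variable {f : ℂ → ℂ}

namespace IsMinimalType

lemma eventually_forall_norm_le (hf : IsMinimalType f) {c : ℝ} (hc : 0 < c) :
    ∀ᶠ R in atTop, ∀ z, ‖z‖ ≤ R → ‖f z‖ ≤ Real.exp (c * R) := by
  obtain ⟨K, hK⟩ := (hf (c / 2) (by positivity)).bound
  simp only [eventually_top, Real.norm_eq_abs, Real.abs_exp] at hK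
  have hexp : Tendsto (fun R => Real.exp (c / 2 * R)) atTop atTop :=
    Real.tendsto_exp_atTop.comp (tendsto_id.const_mul_atTop (by positivity))
  filter_upwards [hexp.eventually_ge_atTop K] with R hKR z hz
  calc ‖f z‖ ≤ K * Real.exp (c / 2 * ‖z‖) := hK z
    _ ≤ Real.exp (c / 2 * R) * Real.exp (c / 2 * R) := by gcongr
    _ = Real.exp (c * R) := by rw [← Real.exp_add]; ring_nf

lemma comp_add_const (hf : IsMinimalType f) (b : ℂ) : IsMinimalType fun z => f (z + b) := by
  intro c hc
  refine ((hf c hc).comp_tendsto (k := fun z => z + b) tendsto_top).trans <|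
    Asymptotics.IsBigO.of_bound (Real.exp (c * ‖b‖)) (eventually_top.2 fun z => ?_)
  simp only [Function.comp_apply, Real.norm_eq_abs, Real.abs_exp, ← Real.exp_add]
  gcongr
  nlinarith [norm_add_le z b]

lemma const_mul (hf : IsMinimalType f) (a : ℂ) : IsMinimalType fun z => a * f z :=
  fun c hc => (hf c hc).const_mul_left a

end IsMinimalType

lemma exists_eqOn_exp_of_forall_ne_zero {h : ℂ → ℂ} {R : ℝ} (hR : 0 < R)
    (hh : DifferentiableOn ℂ h (Metric.ball 0 R)) (h₀ : h 0 = 1)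
    (hne : ∀ z ∈ Metric.ball 0 R, h z ≠ 0) :
    ∃ g : ℂ → ℂ, DifferentiableOn ℂ g (Metric.ball 0 R) ∧ g 0 = 0 ∧
      EqOn h (fun z => Complex.exp (g z)) (Metric.ball 0 R) := by
  have hlogDeriv : DifferentiableOn ℂ (fun z => deriv h z / h z) (Metric.ball 0 R) :=
    (hh.deriv Metric.isOpen_ball).div hh hne
  obtain ⟨g, hg₀, hg⟩ := hlogDeriv.isExactOn_ball.with_val_at 0 0
  have hconst : ∀ z ∈ Metric.ball (0 : ℂ) R,
      HasDerivAt (fun w => h w * Complex.exp (-g w)) 0 z := by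
    intro z hz
    have hhz := (hh.differentiableAt (Metric.isOpen_ball.mem_nhds hz)).hasDerivAt
    refine (hhz.mul (hg z hz).neg.cexp).congr_deriv ?_
    have := hne z hz
    simp only [Pi.neg_apply]
    field_simp
    ring
  refine ⟨g, fun z hz => (hg z hz).differentiableAt.differentiableWithinAt, hg₀, fun z hz => ?_⟩
  have hz_eq : h z * Complex.exp (-g z) = h 0 * Complex.exp (-g 0) :=
    Metric.isOpen_ball.is_const_of_deriv_eq_zero (convex_ball 0 R).isPreconnected
      (fun w hw => (hconst w hw).differentiableAt.differentiableWithinAt)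
      (fun w hw => (hconst w hw).deriv) hz (Metric.mem_ball_self hR)
  rw [hg₀, h₀, neg_zero, Complex.exp_zero, mul_one, Complex.exp_neg] at hz_eq
  exact (mul_inv_eq_one₀ (Complex.exp_ne_zero _)).1 hz_eq

lemma exists_eq_exp_norm_le {h : ℂ → ℂ} {R M : ℝ} (hR : 0 < R) (hM : 0 < M)
    (hh : DifferentiableOn ℂ h (Metric.ball 0 R)) (h₀ : h 0 = 1)
    (hne : ∀ z ∈ Metric.ball 0 R, h z ≠ 0)
    (hb : ∀ z ∈ Metric.ball 0 R, ‖h z‖ ≤ Real.exp M) {z : ℂ} (hz : z ∈ Metric.ball 0 R) :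
    ∃ g : ℂ, h z = Complex.exp g ∧ ‖g‖ ≤ 2 * M * ‖z‖ / (R - ‖z‖) := by
  obtain ⟨g, hgd, hg₀, hg⟩ := exists_eqOn_exp_of_forall_ne_zero hR hh h₀ hne
  refine ⟨g z, hg hz, Complex.borelCaratheodory_zero hM hgd (fun w hw => ?_) hR hz hg₀⟩
  have := hb w hw
  rwa [hg hw, Complex.norm_exp, Real.exp_le_exp] at this

lemma exists_splits_aeval_eq_prod {s : Multiset ℂ} (hs : ∀ a ∈ s, a.im = 0) :
    ∃ p : Polynomial ℝ, p.Splits ∧ ∀ z : ℂ, p.aeval z = (s.map fun a => 1 - z / a).prod := by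
  induction s using Multiset.induction with
  | empty => exact ⟨1, .one, by simp⟩
  | cons a s ih =>
    obtain ⟨p, hp, hps⟩ := ih fun b hb => hs b (Multiset.mem_cons_of_mem hb)
    have ha : (a.re : ℂ) = a := by
      simp [Complex.ext_iff, hs a (Multiset.mem_cons_self a s)]
    refine ⟨(1 - .C a.re⁻¹ * .X) * p, Polynomial.Splits.mul (.of_natDegree_le_one ?_) hp,
      fun z => ?_⟩
    · compute_degree
    · rw [Multiset.map_cons, Multiset.prod_cons, map_mul, hps]
      simp [ha, div_eq_inv_mul]

/-- After dividing out the zeros in a disc of large radius `R`, the quotient is `exp g` with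
`|g| = o(R)` on that disc by minimal type, so by Borel–Carathéodory `g` is small on a fixed disc. -/
lemma exists_splits_eq_aeval_mul_exp (hf : Differentiable ℂ f) (hf₀ : f 0 = 1)
    (hmin : IsMinimalType f) (hreal : ∀ z, f z = 0 → z.im = 0) (r : ℝ) {η : ℝ} (hη : 0 < η) :
    ∃ p : Polynomial ℝ, p.Splits ∧
      ∀ z : ℂ, ‖z‖ ≤ r → ∃ g, f z = p.aeval z * Complex.exp g ∧ ‖g‖ ≤ η := by
  wlog hr : 0 < r generalizing r
  · obtain ⟨p, hp, hpf⟩ := this 1 one_pos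
    exact ⟨p, hp, fun z hz => hpf z (by linarith)⟩
  set c := η / (8 * r)
  have hc : 0 < c := by positivity
  have hgrowth := (tendsto_id.const_mul_atTop two_pos).eventually
    (hmin.eventually_forall_norm_le hc)
  obtain ⟨R, hfR, hrR⟩ := (hgrowth.and (eventually_ge_atTop (2 * r))).exists
  have hR : 0 < R := by linarith
  obtain ⟨s, h, H, hne⟩ := exists_isZeroFactorization_forall_ne_zero hf (by simp [hf₀]) hR.le
  obtain ⟨p, hp, hps⟩ := exists_splits_aeval_eq_prod fun a ha => hreal a (H.eq_zero a ha)
  have hhb : ∀ z, ‖z‖ ≤ 2 * R → ‖h z‖ ≤ Real.exp (c * (2 * R)) := fun z hz => by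
    simpa using H.norm_quotient_le one_pos (fun w hw => hfR w (by simp; linarith)) (z := z)
      (by linarith)
  refine ⟨p, hp, fun z hz => ?_⟩
  obtain ⟨g, hg, hgle⟩ := exists_eq_exp_norm_le hR (M := c * (2 * R)) (by positivity)
    H.differentiable.differentiableOn (H.apply_zero.trans hf₀)
    (fun w hw => hne w (mem_ball_zero_iff.1 hw).le) (fun w hw => hhb w (by simp at hw; linarith))
    (z := z) (by simp; linarith)
  refine ⟨g, by rw [H.eq_prod_mul, hps, hg], hgle.trans ?_⟩
  calc 2 * (c * (2 * R)) * ‖z‖ / (R - ‖z‖) ≤ 2 * (c * (2 * R)) * r / (R / 2) := by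
        gcongr; linarith
    _ = η := by simp only [c]; field_simp; ring

theorem isLaguerrePolya_of_apply_zero_eq_one (hf : Differentiable ℂ f) (hf₀ : f 0 = 1)
    (hmin : IsMinimalType f) (hreal : ∀ z, f z = 0 → z.im = 0) : IsLaguerrePolya f := by
  choose p hp hpf using fun n : ℕ =>
    exists_splits_eq_aeval_mul_exp hf hf₀ hmin hreal n (Nat.one_div_pos_of_nat (n := n) (α := ℝ))
  refine ⟨p, hp, tendstoLocallyUniformly_iff_forall_isCompact.2 fun K hK => ?_⟩
  obtain ⟨r, hKr⟩ := hK.isBounded.exists_norm_le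
  obtain ⟨B, hB⟩ := hK.exists_bound_of_continuousOn hf.continuous.continuousOn
  rw [Metric.tendstoUniformlyOn_iff]
  intro ε hε
  have hlim : Tendsto (fun n : ℕ => B * (2 * (1 / ((n : ℝ) + 1)))) atTop (𝓝 0) := by
    simpa using (tendsto_one_div_add_atTop_nhds_zero_nat (𝕜 := ℝ)).const_mul 2 |>.const_mul B
  filter_upwards [hlim.eventually_lt_const hε, eventually_ge_atTop ⌈r⌉₊] with n hn hrn z hz
  obtain ⟨g, hg, hgn⟩ := hpf n z ((hKr z hz).trans (Nat.ceil_le.1 hrn))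
  have hg₁ : ‖-g‖ ≤ 1 := by
    rw [norm_neg]
    exact hgn.trans (by rw [div_le_one (by positivity)]; linarith [n.cast_nonneg (α := ℝ)])
  have hdiff : (p n).aeval z - f z = f z * (Complex.exp (-g) - 1) := by
    rw [hg, mul_sub, mul_assoc, ← Complex.exp_add]
    simp
  rw [dist_comm, dist_eq_norm, hdiff, norm_mul]
  calc ‖f z‖ * ‖Complex.exp (-g) - 1‖ ≤ B * (2 * ‖-g‖) :=
        mul_le_mul (hB z hz) (Complex.norm_exp_sub_one_le hg₁) (norm_nonneg _)
          ((norm_nonneg _).trans (hB z hz))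
    _ ≤ B * (2 * (1 / ((n : ℝ) + 1))) := by
        rw [norm_neg]
        gcongr
        exact (norm_nonneg _).trans (hB z hz)
    _ < ε := hn

lemma exists_ofReal_ne_zero (hf : Differentiable ℂ f) (hf₀ : f ≠ 0) : ∃ x : ℝ, f x ≠ 0 := by
  by_contra! hzero
  have hofReal : Tendsto ((↑) : ℝ → ℂ) (𝓝[≠] 0) (𝓝[≠] 0) := by
    simpa using Complex.continuous_ofReal.continuousAt.continuousWithinAt.tendsto_nhdsWithin
      (x := 0) (s := {(0 : ℝ)}ᶜ) (t := {(0 : ℂ)}ᶜ) (fun x hx => by simpa using hx)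
  refine hf₀ (AnalyticOnNhd.eq_of_frequently_eq (z₀ := 0) (fun z _ => hf.analyticAt z)
    (fun z _ => analyticAt_const) (hofReal.frequently ?_))
  exact (Eventually.of_forall hzero).frequently

theorem isLaguerrePolya_of_forall_zero_im_eq_zero (hf : Differentiable ℂ f)
    (hmin : IsMinimalType f) (him : ∀ x : ℝ, (f x).im = 0) (hreal : ∀ z, f z = 0 → z.im = 0) :
    IsLaguerrePolya f := by
  obtain ⟨b, hb⟩ := exists_ofReal_ne_zero hf (by rintro rfl; simpa using hreal I rfl)
  have hfb : ((f b).re : ℂ) = f b := by simp [Complex.ext_iff, him b]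
  have hLP : IsLaguerrePolya fun z => (f b)⁻¹ * f (z + b) := by
    refine isLaguerrePolya_of_apply_zero_eq_one (by fun_prop) (by simp [hb])
      ((hmin.comp_add_const b).const_mul _) fun z hz => ?_
    simpa using hreal _ ((mul_eq_zero.1 hz).resolve_left (inv_ne_zero hb))
  have := (hLP.const_mul (f b).re).comp_add_const (-b)
  simpa [hfb, mul_inv_cancel_left₀ hb] using this

end MinimalType

section DoubleZero

lemma mul_pos_of_laguerre {k m s x : ℝ} (hs : 0 < s) (hx : 0 < x) (hm : m ≠ 0)
    (h₂ : k * (4 * x * k) ≤ (-2 * s * m) ^ 2)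
    (h₃ : -2 * s * m * (10 * k - 8 * s * x * m) ≤ (4 * x * k) ^ 2) : 0 < k * m := by
  have hnonneg : 0 ≤ k * m := by
    have : 0 ≤ s * (k * m) := by nlinarith
    exact nonneg_of_mul_nonneg_right this hs
  have hk : k ≠ 0 := by
    rintro rfl
    have : 0 < s ^ 2 * x * m ^ 2 := by positivity
    nlinarith
  exact lt_of_le_of_ne hnonneg (mul_ne_zero hk hm).symm

/-- At a double zero the third-order equation expresses `f'''`, `f''''` and `f'''''` through `f''`
and `m`, and Laguerre's inequalities for `f''` and `f'''` leave only one sign. -/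
theorem re_deriv_deriv_mul_re_pos_of_double_zero {f f₁ f₂ m : ℂ → ℂ} {s x : ℝ}
    (hf : IsLaguerrePolya f) (hf₁ : ∀ z, HasDerivAt f (f₁ z) z)
    (hf₂ : ∀ z, HasDerivAt f₁ (f₂ z) z)
    (hf₃ : ∀ z, HasDerivAt f₂ (2 * f z + 4 * z * f₁ z - 2 * s * m z) z)
    (hm : ∀ z, HasDerivAt m (-2 * s * f z) z) (hs : 0 < s) (hx : 0 < x)
    (hfx : f x = 0) (hf₁x : f₁ x = 0) (hmx : (m x).re ≠ 0) :
    0 < (f₂ x).re * (m x).re := by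
  have hf₄ : ∀ z, HasDerivAt (fun z => 2 * f z + 4 * z * f₁ z - 2 * s * m z)
      (6 * f₁ z + 4 * z * f₂ z + 4 * s ^ 2 * f z) z := fun z => by
    refine ((((hf₁ z).const_mul 2).add (((hasDerivAt_id z).const_mul 4).mul (hf₂ z))).sub
      ((hm z).const_mul (2 * s : ℂ))).congr_deriv ?_
    simp only [id]
    ring
  have hf₅ : ∀ z, HasDerivAt (fun z => 6 * f₁ z + 4 * z * f₂ z + 4 * s ^ 2 * f z)
      (10 * f₂ z + 4 * z * (2 * f z + 4 * z * f₁ z - 2 * s * m z) + 4 * s ^ 2 * f₁ z) z :=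
    fun z => by
    refine ((((hf₂ z).const_mul 6).add (((hasDerivAt_id z).const_mul 4).mul (hf₃ z))).add
      ((hf₁ z).const_mul (4 * s ^ 2 : ℂ))).congr_deriv ?_
    simp only [id]
    ring
  have hd₁ := funext fun z => (hf₁ z).deriv
  have hd₂ := funext fun z => (hf₂ z).deriv
  have hd₃ := funext fun z => (hf₃ z).deriv
  have hd₄ := funext fun z => (hf₄ z).deriv
  have hd₅ := funext fun z => (hf₅ z).deriv
  have hLP : IsLaguerrePolya f₂ := hd₂ ▸ hd₁ ▸ hf.deriv.deriv
  have hlaguerre₂ := hLP.re_mul_re_deriv_deriv_le_sq x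
  have hlaguerre₃ := hLP.deriv.re_mul_re_deriv_deriv_le_sq x
  simp only [hd₃, hd₄, hd₅, hfx, hf₁x] at hlaguerre₂ hlaguerre₃
  have hre₃ : (2 * 0 + 4 * x * 0 - 2 * s * m x : ℂ).re = -2 * s * (m x).re := by simp
  have hre₄ : (6 * 0 + 4 * x * f₂ x + 4 * s ^ 2 * 0 : ℂ).re = 4 * x * (f₂ x).re := by simp
  have hre₅ : (10 * f₂ x + 4 * x * (2 * 0 + 4 * x * 0 - 2 * s * m x) + 4 * s ^ 2 * 0 : ℂ).re =
      10 * (f₂ x).re - 8 * s * x * (m x).re := by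
    simp
    ring
  rw [hre₃, hre₄] at hlaguerre₂
  rw [hre₃, hre₄, hre₅] at hlaguerre₃
  exact mul_pos_of_laguerre hs hx hmx hlaguerre₂ hlaguerre₃

end DoubleZero

section Slope

variable {f f₁ f₂ : ℂ → ℂ}

lemma dslope_eq_intervalIntegral (hf : ∀ z, HasDerivAt f (f₁ z) z) (hf₁ : Continuous f₁)
    (z w : ℂ) : dslope f z w = ∫ t in (0 : ℝ)..1, f₁ (z + t * (w - z)) := by
  rcases eq_or_ne w z with rfl | hwz
  · simp [(hf w).deriv]
  · rw [dslope_of_ne _ hwz, slope_def_field, div_eq_iff (sub_ne_zero.2 hwz), mul_comm]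
    simpa using (intervalIntegral.integral_unitInterval_deriv_eq_sub (z₀ := z) (z₁ := w - z)
      (f := f) (f' := f₁) (by fun_prop) fun t _ => hf _).symm

lemma norm_dslope_sub_dslope_sub_le {U : Set ℂ} (hU : Convex ℝ U)
    (hf : ∀ z, HasDerivAt f (f₁ z) z) (hf₁ : ∀ z, HasDerivAt f₁ (f₂ z) z) {k : ℂ} {η : ℝ}
    (hη : ∀ z ∈ U, ‖f₂ z - k‖ ≤ η) {z w w' : ℂ} (hz : z ∈ U) (hw : w ∈ U) (hw' : w' ∈ U) :
    ‖dslope f z w - dslope f z w' - k / 2 * (w - w')‖ ≤ η * ‖w - w'‖ := by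
  have hcont : Continuous f₁ := continuous_iff_continuousAt.2 fun z => (hf₁ z).continuousAt
  have hlin : k / 2 * (w - w') = ∫ t in (0 : ℝ)..1, (t : ℂ) * (k * (w - w')) := by
    rw [intervalIntegral.integral_mul_const, intervalIntegral.integral_ofReal, integral_id]
    push_cast
    ring
  rw [dslope_eq_intervalIntegral hf hcont, dslope_eq_intervalIntegral hf hcont, hlin,
    ← intervalIntegral.integral_sub, ← intervalIntegral.integral_sub]
  rotate_left
  iterate 4 exact Continuous.intervalIntegrable (by fun_prop) _ _
  have hη₀ : 0 ≤ η := (norm_nonneg _).trans (hη z hz)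
  have hbound : ∀ t ∈ uIoc (0 : ℝ) 1, ‖f₁ (z + t * (w - z)) - f₁ (z + t * (w' - z))
      - (t : ℂ) * (k * (w - w'))‖ ≤ η * ‖w - w'‖ := fun t ht => by
    rw [uIoc_of_le zero_le_one] at ht
    have hmem : ∀ v ∈ U, z + t * (v - z) ∈ U := fun v hv => by
      simpa using hU.add_smul_sub_mem hz hv ⟨ht.1.le, ht.2⟩
    have hmvt := hU.norm_image_sub_le_of_norm_hasDerivWithin_le (f := fun v => f₁ v - k * v)
      (fun v _ => ((hf₁ v).sub ((hasDerivAt_id v).const_mul k)).hasDerivWithinAt)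
      (fun v hv => by simpa using hη v hv) (hmem w' hw') (hmem w hw)
    have hdiff : z + t * (w - z) - (z + t * (w' - z)) = t * (w - w') := by ring
    rw [hdiff, norm_mul, Complex.norm_of_nonneg ht.1.le] at hmvt
    calc _ = ‖f₁ (z + t * (w - z)) - k * (z + t * (w - z))
          - (f₁ (z + t * (w' - z)) - k * (z + t * (w' - z)))‖ := by ring_nf
      _ ≤ η * (t * ‖w - w'‖) := hmvt
      _ ≤ η * ‖w - w'‖ := by
        gcongr
        exact mul_le_of_le_one_left (norm_nonneg _) ht.2
  simpa using intervalIntegral.norm_integral_le_of_norm_le_const hbound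

lemma dslope_conj_eq_zero (hconj : ∀ z, f (conj z) = conj (f z)) {z : ℂ} (hz : f z = 0)
    (him : z.im ≠ 0) : dslope f z (conj z) = 0 := by
  rw [dslope_of_ne _ (mt Complex.conj_eq_iff_im.1 him), slope_def_field, hconj, hz]
  simp

/-- If `z` and `conj z` are zeros of `f`, coalescing into a double zero when `z` is real, then
`f x` is close to `k / 2 * ‖x - z‖ ^ 2` for real `x`. -/
lemma re_conj_mul_nonneg_of_dslope_conj_eq_zero {U : Set ℂ} (hU : Convex ℝ U)
    (hf : ∀ z, HasDerivAt f (f₁ z) z) (hf₁ : ∀ z, HasDerivAt f₁ (f₂ z) z) {k : ℂ}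
    (hk : ∀ z ∈ U, ‖f₂ z - k‖ ≤ ‖k‖ / 2) {z : ℂ} (hz : z ∈ U) (hzc : conj z ∈ U) {x : ℝ}
    (hx : (x : ℂ) ∈ U) (hfz : f z = 0) (hslope : dslope f z (conj z) = 0) :
    0 ≤ (conj k * f x).re := by
  set e := dslope f z x - k / 2 * (x - conj z)
  have he : ‖e‖ ≤ ‖k‖ / 2 * ‖(x : ℂ) - conj z‖ := by
    simpa [hslope] using norm_dslope_sub_dslope_sub_le hU hf hf₁ hk hz hx hzc
  have hnorm : ‖(x : ℂ) - conj z‖ = ‖(x : ℂ) - z‖ := by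
    rw [← Complex.norm_conj]
    simp
  have hfx : f x = (x - z) * dslope f z x := by
    simpa [hfz] using (sub_smul_dslope f z x).symm
  have hmain : conj k * f x = (‖k‖ ^ 2 / 2 * ‖(x : ℂ) - z‖ ^ 2 : ℝ) + conj k * (x - z) * e := by
    have hkk := Complex.conj_mul' k
    have hzz := Complex.mul_conj' ((x : ℂ) - z)
    simp only [map_sub, Complex.conj_ofReal] at hzz
    push_cast
    rw [hfx, ← hkk, ← hzz]
    simp only [e]
    ring
  have herr : ‖conj k * (x - z) * e‖ ≤ ‖k‖ ^ 2 / 2 * ‖(x : ℂ) - z‖ ^ 2 := by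
    rw [hnorm] at he
    calc ‖conj k * (x - z) * e‖ = ‖k‖ * ‖(x : ℂ) - z‖ * ‖e‖ := by simp
      _ ≤ ‖k‖ * ‖(x : ℂ) - z‖ * (‖k‖ / 2 * ‖(x : ℂ) - z‖) := by gcongr
      _ = _ := by ring
  rw [hmain, Complex.add_re, Complex.ofReal_re]
  linarith [neg_le_of_abs_le (Complex.abs_re_le_norm (conj k * (x - z) * e))]

end Slope

section Hurwitz

lemma exists_mem_ball_eq_zero_of_norm_lt {f : ℂ → ℂ} {c : ℂ} {r : ℝ} (hr : 0 < r)
    (hf : DiffContOnCl ℂ f (Metric.ball c r)) (hlt : ∀ z ∈ Metric.sphere c r, ‖f c‖ < ‖f z‖) :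
    ∃ z ∈ Metric.ball c r, f z = 0 := by
  by_contra! hne
  have hne' : ∀ z ∈ closure (Metric.ball c r), f z ≠ 0 := fun z hz => by
    rw [closure_ball c hr.ne', ← Metric.ball_union_sphere] at hz
    exact hz.elim (hne z) fun hz => norm_pos_iff.1 ((norm_nonneg _).trans_lt (hlt z hz))
  obtain ⟨w, hw, hmin⟩ := (isCompact_sphere c r).exists_isMinOn
    (NormedSpace.sphere_nonempty.2 hr.le) (f := fun z => ‖f z‖)
    (((closure_ball c hr.ne' ▸ hf.continuousOn).mono Metric.sphere_subset_closedBall).norm)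
  have hle := Complex.norm_le_of_forall_mem_frontier_norm_le Metric.isBounded_ball (hf.inv hne')
    (C := ‖f w‖⁻¹) (fun z hz => ?_) (subset_closure (Metric.mem_ball_self hr))
  · rw [Pi.inv_apply, norm_inv, inv_le_inv₀ (norm_pos_iff.2 (hne c (Metric.mem_ball_self hr)))
      ((norm_nonneg _).trans_lt (hlt w hw))] at hle
    exact hle.not_gt (hlt w hw)
  · rw [frontier_ball c hr.ne'] at hz
    rw [Pi.inv_apply, norm_inv]
    exact inv_anti₀ ((norm_nonneg _).trans_lt (hlt w hw)) (hmin hz)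

lemma eventually_exists_mem_ball_eq_zero {X : Type*} [TopologicalSpace X] {H : X → ℂ → ℂ}
    (hc : Continuous (Function.uncurry H)) (hd : ∀ s, Differentiable ℂ (H s)) {s₀ : X}
    (hne : H s₀ ≠ 0) {z₀ : ℂ} (hz₀ : H s₀ z₀ = 0) {r : ℝ} (hr : 0 < r) :
    ∀ᶠ s in 𝓝 s₀, ∃ z ∈ Metric.ball z₀ r, H s z = 0 := by
  have hisolated : ∀ᶠ z in 𝓝[≠] z₀, H s₀ z ≠ 0 := by
    by_contra hfreq
    exact hne (AnalyticOnNhd.eq_of_frequently_eq (fun z _ => (hd s₀).analyticAt z)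
      (fun z _ => analyticAt_const) ((not_eventually.1 hfreq).mono fun z hz => not_not.1 hz))
  obtain ⟨δ, hδ, hball⟩ := Metric.eventually_nhds_iff.1 (eventually_nhdsWithin_iff.1 hisolated)
  obtain ⟨ρ, hρ, hρδ⟩ := exists_between (lt_min hr hδ)
  have hlt : ∀ᶠ s in 𝓝 s₀, ∀ z ∈ Metric.sphere z₀ ρ, ‖H s z₀‖ < ‖H s z‖ := by
    refine (isCompact_sphere z₀ ρ).eventually_forall_of_forall_eventually fun z hz => ?_
    have hcont : Continuous fun p : X × ℂ => ‖H p.1 p.2‖ - ‖H p.1 z₀‖ :=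
      hc.norm.sub (hc.comp (continuous_fst.prodMk continuous_const)).norm
    have hpos : 0 < ‖H s₀ z‖ - ‖H s₀ z₀‖ := by
      rw [hz₀, norm_zero, sub_zero, norm_pos_iff]
      refine hball ?_ ?_
      · rw [Metric.mem_sphere.1 hz]
        exact hρδ.trans_le (min_le_right r δ)
      · exact Metric.ne_of_mem_sphere hz hρ.ne'
    filter_upwards [hcont.continuousAt.eventually_const_lt hpos] with p hp using sub_pos.1 hp
  filter_upwards [hlt] with s hs
  obtain ⟨z, hz, hz_eq⟩ := exists_mem_ball_eq_zero_of_norm_lt hρ (hd s).diffContOnCl hs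
  exact ⟨z, Metric.ball_subset_ball (hρδ.le.trans (min_le_left r δ)) hz, hz_eq⟩

end Hurwitz

section Families

lemma right_of_exists_gt_of_frequently_nhdsLT {α : Type*} [ConditionallyCompleteLinearOrder α]
    [TopologicalSpace α] [OrderTopology α] {P : α → Prop} {a b : α} (hab : a ≤ b) (ha : P a)
    (hgt : ∀ s ∈ Ico a b, P s → ∃ t ∈ Ioc s b, P t)
    (hlim : ∀ s ∈ Ioc a b, (∃ᶠ t in 𝓝[<] s, t ∈ Icc a b ∧ P t) → P s) : P b := by
  set B := {s ∈ Icc a b | P s}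
  have hmem : a ∈ B := ⟨left_mem_Icc.2 hab, ha⟩
  have hlub := isLUB_csSup ⟨a, hmem⟩ ⟨b, fun s hs => hs.1.2⟩
  set c := sSup B
  have hc : c ∈ Icc a b := ⟨hlub.1 hmem, hlub.2 fun s hs => hs.1.2⟩
  have hPc : P c := by
    by_contra hnot
    refine hnot (hlim c ⟨hc.1.lt_of_ne fun heq => hnot (heq ▸ ha), hc.2⟩ ?_)
    refine frequently_nhdsWithin_iff.2 (((hlub.frequently_mem ⟨a, hmem⟩).filter_mono
      nhdsWithin_le_nhds).mono fun t ht => ⟨ht, ?_⟩)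
    exact (hlub.1 ht).lt_of_ne fun heq => hnot (heq ▸ ht.2)
  rcases hc.2.eq_or_lt with heq | hlt
  · exact heq ▸ hPc
  · obtain ⟨t, ht, hPt⟩ := hgt c ⟨hc.1, hlt⟩ hPc
    exact absurd (hlub.1 ⟨⟨hc.1.trans ht.1.le, ht.2⟩, hPt⟩) ht.1.not_ge

/-- A family `H s` of entire functions that take real values on the real axis, with its first two
derivatives `H₁`, `H₂` in the variable and its derivative `M` in the parameter `s`, all jointly
continuous. -/
structure IsConjInvariantFamily (H H₁ H₂ M : ℝ → ℂ → ℂ) : Prop where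
  continuous : Continuous (Function.uncurry H)
  continuous_deriv : Continuous (Function.uncurry H₁)
  continuous_deriv_deriv : Continuous (Function.uncurry H₂)
  continuous_param_deriv : Continuous (Function.uncurry M)
  hasDerivAt : ∀ s z, HasDerivAt (H s) (H₁ s z) z
  hasDerivAt_deriv : ∀ s z, HasDerivAt (H₁ s) (H₂ s z) z
  hasDerivAt_param : ∀ s z, HasDerivAt (H · z) (M s z) s
  apply_conj : ∀ s z, H s (conj z) = conj (H s z)

/-- The property whose persistence along a family is studied: the function has a zero off the
real axis. -/
def HasNonrealZero (f : ℂ → ℂ) : Prop := ∃ z : ℂ, z.im ≠ 0 ∧ f z = 0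

namespace IsConjInvariantFamily

variable {H H₁ H₂ M : ℝ → ℂ → ℂ} {s₀ x₀ : ℝ}

lemma differentiable (h : IsConjInvariantFamily H H₁ H₂ M) (s : ℝ) : Differentiable ℂ (H s) :=
  fun z => (h.hasDerivAt s z).differentiableAt

lemma apply_ofReal_im (h : IsConjInvariantFamily H H₁ H₂ M) (s x : ℝ) : (H s x).im = 0 := by
  rw [← Complex.conj_eq_iff_im, ← h.apply_conj, Complex.conj_ofReal]

lemma param_deriv_ofReal_im (h : IsConjInvariantFamily H H₁ H₂ M) (s x : ℝ) : (M s x).im = 0 := by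
  have hder : HasDerivAt (fun s => (H s x).im) (M s x).im s :=
    Complex.imCLM.hasFDerivAt.comp_hasDerivAt s (h.hasDerivAt_param s x)
  simp only [h.apply_ofReal_im] at hder
  exact hder.unique (hasDerivAt_const s 0)

lemma continuous_dslope_conj (h : IsConjInvariantFamily H H₁ H₂ M) :
    Continuous fun p : ℝ × ℂ => dslope (H p.1) p.2 (conj p.2) := by
  have hcont (s : ℝ) : Continuous (H₁ s) := h.continuous_deriv.comp (Continuous.prodMk_right s)
  simp only [dslope_eq_intervalIntegral (h.hasDerivAt _) (hcont _)]
  refine intervalIntegral.continuous_parametric_intervalIntegral_of_continuous'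
    (f := fun (p : ℝ × ℂ) t => H₁ p.1 (p.2 + t * (conj p.2 - p.2))) ?_ 0 1
  exact h.continuous_deriv.comp (f := fun q : (ℝ × ℂ) × ℝ =>
    (q.1.1, q.1.2 + q.2 * (conj q.1.2 - q.1.2))) (by fun_prop)

lemma dslope_conj_ofReal (h : IsConjInvariantFamily H H₁ H₂ M) (s x : ℝ) :
    dslope (H s) x (conj (x : ℂ)) = H₁ s x := by
  rw [Complex.conj_ofReal, dslope_same, (h.hasDerivAt s x).deriv]

lemma strictMonoOn_re_mul (h : IsConjInvariantFamily H H₁ H₂ M) {k z : ℂ} {I : Set ℝ}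
    (hI : Convex ℝ I) (hpos : ∀ s ∈ I, 0 < (k * M s z).re) :
    StrictMonoOn (fun s => (k * H s z).re) I := by
  have hder (s : ℝ) : HasDerivAt (fun t => (k * H t z).re) (k * M s z).re s :=
    Complex.reCLM.hasFDerivAt.comp_hasDerivAt s ((h.hasDerivAt_param s z).const_mul k)
  refine strictMonoOn_of_deriv_pos hI (fun s _ => (hder s).continuousAt.continuousWithinAt)
    fun s hs => ?_
  rw [(hder s).deriv]
  exact hpos s (interior_subset hs)

lemma eventually_double_zero_dissolves (h : IsConjInvariantFamily H H₁ H₂ M)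
    (hx₀ : H s₀ x₀ = 0) (hx₀' : H₁ s₀ x₀ = 0) (hpos : 0 < (conj (H₂ s₀ x₀) * M s₀ x₀).re) :
    ∀ᶠ p : ℝ × ℂ in 𝓝 (s₀, (x₀ : ℂ)), H p.1 p.2 = 0 →
      (s₀ < p.1 → p.2.im ≠ 0) ∧ (p.1 < s₀ → p.2.im = 0) := by
  set k := H₂ s₀ x₀
  have hk : 0 < ‖k‖ := norm_pos_iff.2 fun hk => by simp [hk] at hpos
  have hH₂ : ∀ᶠ p : ℝ × ℂ in 𝓝 (s₀, (x₀ : ℂ)), ‖H₂ p.1 p.2 - k‖ < ‖k‖ / 2 :=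
    (h.continuous_deriv_deriv.sub continuous_const).norm.continuousAt.eventually_lt_const
      (by simpa [k] using hk)
  have hM : ∀ᶠ p : ℝ × ℂ in 𝓝 (s₀, (x₀ : ℂ)), 0 < (conj k * M p.1 p.2).re :=
    (Complex.continuous_re.comp (continuous_const.mul
      h.continuous_param_deriv)).continuousAt.eventually_const_lt hpos
  obtain ⟨δ, hδ, hnear⟩ := Metric.eventually_nhds_iff_ball.1 (hH₂.and hM)
  simp only [← ball_prod_same, mem_prod, Prod.forall] at hnear
  filter_upwards [Metric.ball_mem_nhds _ hδ] with ⟨s, z⟩ hsz hz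
  obtain ⟨hs, hzδ⟩ : s ∈ Metric.ball s₀ δ ∧ z ∈ Metric.ball (x₀ : ℂ) δ := by
    simpa only [← ball_prod_same, mem_prod] using hsz
  have hmono : ∀ w ∈ Metric.ball (x₀ : ℂ) δ,
      StrictMonoOn (fun s => (conj k * H s w).re) (Metric.ball s₀ δ) := fun w hw =>
    h.strictMonoOn_re_mul (convex_ball s₀ δ) fun t ht => (hnear t w ⟨ht, hw⟩).2
  have hnonneg : ∀ t ∈ Metric.ball s₀ δ, ∀ x : ℝ, (x : ℂ) ∈ Metric.ball (x₀ : ℂ) δ →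
      ∀ w ∈ Metric.ball (x₀ : ℂ) δ, H t w = 0 → dslope (H t) w (conj w) = 0 →
        0 ≤ (conj k * H t x).re := fun t ht x hx w hw hwt hslope =>
    re_conj_mul_nonneg_of_dslope_conj_eq_zero (convex_ball (x₀ : ℂ) δ) (h.hasDerivAt t)
      (h.hasDerivAt_deriv t) (fun v hv => (hnear t v ⟨ht, hv⟩).1.le) hw
      (by rwa [Metric.mem_ball, ← Complex.conj_ofReal x₀, Complex.dist_conj_conj]) hx hwt hslope
  have hs₀ := Metric.mem_ball_self (x := s₀) hδ
  have hx₀δ := Metric.mem_ball_self (x := (x₀ : ℂ)) hδ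
  constructor
  · intro hlt him
    lift z to ℝ using him
    have hge := hnonneg s₀ hs₀ z hzδ x₀ hx₀δ hx₀ ((h.dslope_conj_ofReal s₀ x₀).trans hx₀')
    have := hmono z hzδ hs₀ hs hlt
    simp only [hz, mul_zero, Complex.zero_re] at this
    exact hge.not_gt this
  · intro hlt
    by_contra him
    have hge := hnonneg s hs x₀ hx₀δ z hzδ hz (dslope_conj_eq_zero (h.apply_conj s) hz him)
    have := hmono x₀ hx₀δ hs hs₀ hlt
    simp only [hx₀, mul_zero, Complex.zero_re] at this
    exact hge.not_gt this

lemma eventually_hasNonrealZero (h : IsConjInvariantFamily H H₁ H₂ M) (hne : H s₀ ≠ 0)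
    (hs₀ : HasNonrealZero (H s₀)) : ∀ᶠ s in 𝓝 s₀, HasNonrealZero (H s) := by
  obtain ⟨z₀, him, hz₀⟩ := hs₀
  filter_upwards [eventually_exists_mem_ball_eq_zero h.continuous h.differentiable hne hz₀
    (abs_pos.2 him)] with s ⟨z, hz, hz_eq⟩
  refine ⟨z, fun hz_im => ?_, hz_eq⟩
  have := (Complex.abs_im_le_norm (z - z₀)).trans_lt (mem_ball_iff_norm.1 hz)
  simp [hz_im] at this

lemma eventually_nhdsGT_hasNonrealZero (h : IsConjInvariantFamily H H₁ H₂ M) (hne : H s₀ ≠ 0)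
    (hx₀ : H s₀ x₀ = 0) (hx₀' : H₁ s₀ x₀ = 0) (hpos : 0 < (conj (H₂ s₀ x₀) * M s₀ x₀).re) :
    ∀ᶠ s in 𝓝[>] s₀, HasNonrealZero (H s) := by
  obtain ⟨δ, hδ, hnear⟩ :=
    Metric.eventually_nhds_iff_ball.1 (h.eventually_double_zero_dissolves hx₀ hx₀' hpos)
  rw [eventually_nhdsWithin_iff]
  filter_upwards [Metric.ball_mem_nhds s₀ hδ, eventually_exists_mem_ball_eq_zero h.continuous
    h.differentiable hne hx₀ hδ] with s hs ⟨z, hz, hz_eq⟩ hlt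
  exact ⟨z, (hnear (s, z) (ball_prod_same s₀ (x₀ : ℂ) δ ▸ ⟨hs, hz⟩) hz_eq).1 hlt, hz_eq⟩

lemma eventually_nhdsLT_forall_zero_im_eq_zero (h : IsConjInvariantFamily H H₁ H₂ M)
    (hreal : ∀ z, H s₀ z = 0 → z.im = 0)
    (hsign : ∀ x : ℝ, H s₀ x = 0 → H₁ s₀ x = 0 → 0 < (conj (H₂ s₀ x) * M s₀ x).re) {K : Set ℂ}
    (hK : IsCompact K) : ∀ᶠ s in 𝓝[<] s₀, ∀ z ∈ K, H s z = 0 → z.im = 0 := by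
  suffices ∀ᶠ s in 𝓝 s₀, ∀ z ∈ K, s < s₀ → H s z = 0 → z.im = 0 from
    eventually_nhdsWithin_iff.2 (this.mono fun s hs hlt z hz => hs z hz hlt)
  refine hK.eventually_forall_of_forall_eventually fun ζ _ => ?_
  rcases ne_or_eq (H s₀ ζ) 0 with hζ | hζ
  · filter_upwards [h.continuous.continuousAt.eventually_ne hζ] with p hp _ hp_eq
    exact absurd hp_eq hp
  · lift ζ to ℝ using hreal ζ hζ
    rcases ne_or_eq (H₁ s₀ ζ) 0 with hζ' | hζ'
    · rw [← h.dslope_conj_ofReal] at hζ'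
      filter_upwards [h.continuous_dslope_conj.continuousAt.eventually_ne hζ'] with p hp _ hp_eq
      exact not_not.1 fun him => hp (dslope_conj_eq_zero (h.apply_conj p.1) hp_eq him)
    · filter_upwards [h.eventually_double_zero_dissolves hζ hζ' (hsign ζ hζ hζ')]
        with p hp hlt hp_eq using (hp hp_eq).2 hlt

theorem hasNonrealZero_of_double_zero (h : IsConjInvariantFamily H H₁ H₂ M) {s₁ S R : ℝ}
    (hS : s₁ < S) (hR : ∀ s ∈ Icc s₁ S, ∀ z, H s z = 0 → z.im ≠ 0 → ‖z‖ ≤ R)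
    (hsign : ∀ s ∈ Icc s₁ S, (∀ z, H s z = 0 → z.im = 0) →
      ∀ x : ℝ, H s x = 0 → H₁ s x = 0 → 0 < (conj (H₂ s x) * M s x).re)
    {x₁ : ℝ} (hx₁ : H s₁ x₁ = 0) (hx₁' : H₁ s₁ x₁ = 0) : HasNonrealZero (H S) := by
  have hne : ∀ s ∈ Icc s₁ S, H s ≠ 0 := fun s hs h0 => by
    have := hR s hs ((|R| + 1 : ℝ) * Complex.I) (by simp [h0])
      (by simpa using (by positivity : |R| + 1 ≠ 0))
    rw [norm_mul, Complex.norm_I, mul_one, Complex.norm_of_nonneg (by positivity)] at this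
    linarith [le_abs_self R]
  have hreal_of_not : ∀ {s}, ¬ HasNonrealZero (H s) → ∀ z, H s z = 0 → z.im = 0 :=
    fun hs z hz => not_not.1 fun him => hs ⟨z, him, hz⟩
  have hstart : ∃ s ∈ Icc s₁ S, HasNonrealZero (H s) := by
    by_cases hs₁ : HasNonrealZero (H s₁)
    · exact ⟨s₁, left_mem_Icc.2 hS.le, hs₁⟩
    · have hmem := left_mem_Icc.2 hS.le
      obtain ⟨s, hs, hsS⟩ := ((h.eventually_nhdsGT_hasNonrealZero (hne s₁ hmem) hx₁ hx₁'
        (hsign s₁ hmem (hreal_of_not hs₁) x₁ hx₁ hx₁')).and (Ioo_mem_nhdsGT hS)).exists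
      exact ⟨s, Ioo_subset_Icc_self hsS, hs⟩
  obtain ⟨a, ha, hnon_a⟩ := hstart
  have hIcc : Icc a S ⊆ Icc s₁ S := Icc_subset_Icc_left ha.1
  refine right_of_exists_gt_of_frequently_nhdsLT (P := fun s => HasNonrealZero (H s)) ha.2 hnon_a
    (fun s hs hnon => ?_) fun s hs hfreq => ?_
  · obtain ⟨t, ht, htS⟩ := (((h.eventually_hasNonrealZero (hne s (hIcc (Ico_subset_Icc_self hs)))
      hnon).filter_mono nhdsWithin_le_nhds).and (Ioo_mem_nhdsGT hs.2)).exists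
    exact ⟨t, Ioo_subset_Ioc_self htS, ht⟩
  · by_contra hnot
    have hs := hIcc (Ioc_subset_Icc_self hs)
    have hleft := h.eventually_nhdsLT_forall_zero_im_eq_zero (hreal_of_not hnot)
      (hsign s hs (hreal_of_not hnot)) (isCompact_closedBall (0 : ℂ) R)
    obtain ⟨t, ⟨ht, z, him, hz⟩, hlocal⟩ := (hfreq.and_eventually hleft).exists
    exact him (hlocal z (by simpa using hR t (hIcc ht) z hz him) hz)

end IsConjInvariantFamily

end Families

section SchrodingerEquation

lemma eq_zero_of_hasDerivAt_nonneg_of_eq {g g' : ℝ → ℝ} {a b : ℝ} (hab : a < b)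
    (hg : ∀ t, HasDerivAt g (g' t) t) (hnonneg : ∀ t ∈ Icc a b, 0 ≤ g' t) (heq : g a = g b) :
    ∀ t ∈ Icc a b, g' t = 0 := by
  have hmono : MonotoneOn g (Icc a b) := by
    refine monotoneOn_of_deriv_nonneg (convex_Icc a b)
      (fun t _ => (hg t).continuousAt.continuousWithinAt)
      (fun t _ => (hg t).differentiableAt.differentiableWithinAt) fun t ht => ?_
    rw [(hg t).deriv]
    exact hnonneg t (interior_subset ht)
  have hconst : ∀ t ∈ Icc a b, g t = g a := fun t ht =>
    le_antisymm (heq ▸ hmono ht (right_mem_Icc.2 hab.le) ht.2)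
      (hmono (left_mem_Icc.2 hab.le) ht ht.1)
  exact fun t ht => (uniqueDiffOn_Icc hab t ht).eq_deriv _ (hg t).hasDerivWithinAt
    ((hasDerivWithinAt_const t _ (g a)).congr hconst (hconst t ht))

/-- `y` solves the Schrödinger equation `-y'' + V y = μ y` with complex potential `V` on the line.
The equation is encoded as a first-order system for `y` and its derivative `Y`. -/
structure IsSchrodingerPair (V : ℝ → ℂ) (μ : ℂ) (y Y : ℝ → ℂ) : Prop where
  hasDerivAt : ∀ t, HasDerivAt y (Y t) t
  hasDerivAt_deriv : ∀ t, HasDerivAt Y ((V t - μ) * y t) t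

namespace IsSchrodingerPair

variable {V : ℝ → ℂ} {μ : ℂ} {y Y x X : ℝ → ℂ} {a b C : ℝ}

lemma const_mul (h : IsSchrodingerPair V μ y Y) (c : ℂ) :
    IsSchrodingerPair V μ (fun t => c * y t) fun t => c * Y t where
  hasDerivAt t := (h.hasDerivAt t).const_mul c
  hasDerivAt_deriv t := ((h.hasDerivAt_deriv t).const_mul c).congr_deriv (by ring)

lemma sub (h : IsSchrodingerPair V μ y Y) (h' : IsSchrodingerPair V μ x X) :
    IsSchrodingerPair V μ (fun t => y t - x t) fun t => Y t - X t where
  hasDerivAt t := (h.hasDerivAt t).sub (h'.hasDerivAt t)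
  hasDerivAt_deriv t :=
    ((h.hasDerivAt_deriv t).sub (h'.hasDerivAt_deriv t)).congr_deriv (by ring)

lemma continuous (h : IsSchrodingerPair V μ y Y) : Continuous y :=
  continuous_iff_continuousAt.2 fun t => (h.hasDerivAt t).continuousAt

lemma hasDerivAt_mul_conj (h : IsSchrodingerPair V μ y Y) (t : ℝ) :
    HasDerivAt (fun t => Y t * conj (y t))
      ((V t - μ) * (‖y t‖ ^ 2 : ℝ) + (‖Y t‖ ^ 2 : ℝ)) t := by
  refine ((h.hasDerivAt_deriv t).mul (h.hasDerivAt t).star).congr_deriv ?_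
  push_cast
  rw [← Complex.mul_conj', ← Complex.mul_conj', mul_assoc]
  rfl

lemma hasDerivAt_re_mul_conj (h : IsSchrodingerPair V μ y Y) (t : ℝ) :
    HasDerivAt (fun t => (Y t * conj (y t)).re)
      (((V t).re - μ.re) * ‖y t‖ ^ 2 + ‖Y t‖ ^ 2) t :=
  (Complex.reCLM.hasFDerivAt.comp_hasDerivAt t (h.hasDerivAt_mul_conj t)).congr_deriv (by
    rw [Complex.reCLM_apply, Complex.add_re, Complex.re_mul_ofReal, Complex.ofReal_re,
      Complex.sub_re])

lemma hasDerivAt_im_mul_conj (h : IsSchrodingerPair V μ y Y) (t : ℝ) :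
    HasDerivAt (fun t => (Y t * conj (y t)).im) (((V t).im - μ.im) * ‖y t‖ ^ 2) t :=
  (Complex.imCLM.hasFDerivAt.comp_hasDerivAt t (h.hasDerivAt_mul_conj t)).congr_deriv (by
    rw [Complex.imCLM_apply, Complex.add_im, Complex.im_mul_ofReal, Complex.ofReal_im,
      Complex.sub_im, add_zero])

lemma lt_re_of_dirichlet (h : IsSchrodingerPair V μ y Y) (hab : a < b) {c : ℝ}
    (hV : ∀ t ∈ Icc a b, c ≤ (V t).re) (ha : y a = 0) (hb : y b = 0) (hY : Y a ≠ 0) :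
    c < μ.re := by
  by_contra! hμ
  have := eq_zero_of_hasDerivAt_nonneg_of_eq hab h.hasDerivAt_re_mul_conj (fun t ht => by
    have := sub_nonneg.2 (hμ.trans (hV t ht))
    positivity) (by simp [ha, hb]) a (left_mem_Icc.2 hab.le)
  simp [ha, hY] at this

lemma abs_im_le_of_dirichlet (h : IsSchrodingerPair V μ y Y) (hab : a < b)
    (hV : ∀ t ∈ Icc a b, |(V t).im| ≤ C) (ha : y a = 0) (hb : y b = 0) (hY : Y a ≠ 0) :
    |μ.im| ≤ C := by
  by_contra! hμ
  have hbound : ∀ t ∈ Icc a b, |(V t).im| < |μ.im| := fun t ht => (hV t ht).trans_lt hμ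
  have hzero : ∀ t ∈ Icc a b, ((V t).im - μ.im) * ‖y t‖ ^ 2 = 0 := by
    rcases abs_cases μ.im with ⟨habs, -⟩ | ⟨habs, -⟩
    · have := eq_zero_of_hasDerivAt_nonneg_of_eq hab (fun t => (h.hasDerivAt_im_mul_conj t).neg)
        (fun t ht => neg_nonneg.2 (mul_nonpos_of_nonpos_of_nonneg
          (by linarith [(abs_lt.1 (hbound t ht)).2]) (sq_nonneg _))) (by simp [ha, hb])
      exact fun t ht => neg_eq_zero.1 (this t ht)
    · exact eq_zero_of_hasDerivAt_nonneg_of_eq hab h.hasDerivAt_im_mul_conj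
        (fun t ht => mul_nonneg (by linarith [(abs_lt.1 (hbound t ht)).1]) (sq_nonneg _))
        (by simp [ha, hb])
  have hy : ∀ t ∈ Icc a b, y t = 0 := fun t ht => by
    have hne : (V t).im - μ.im ≠ 0 := fun heq =>
      (hbound t ht).ne (by rw [sub_eq_zero.1 heq])
    simpa [hne] using hzero t ht
  have hmem := left_mem_Icc.2 hab.le
  exact hY ((uniqueDiffOn_Icc hab a hmem).eq_deriv _ (h.hasDerivAt a).hasDerivWithinAt
    ((hasDerivWithinAt_const a _ 0).congr hy ha))

lemma mul_norm_le_mul_exp (h : IsSchrodingerPair V μ y Y) (hab : a ≤ b)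
    (hV : ∀ t ∈ Icc a b, ‖V t‖ ≤ C) (ha : y a = 0) {k : ℝ} (hk : 0 < k) :
    k * ‖y b‖ ≤ ‖Y a‖ * Real.exp ((k + (C + ‖μ‖) / k) * (b - a)) := by
  have hder (t : ℝ) : HasDerivAt (fun t => ((k : ℂ) * y t, Y t))
      ((k : ℂ) * Y t, (V t - μ) * y t) t :=
    ((h.hasDerivAt t).const_mul (k : ℂ)).prodMk (h.hasDerivAt_deriv t)
  have hnorm (t : ℝ) : k * ‖y t‖ ≤ ‖((k : ℂ) * y t, Y t)‖ := by
    calc k * ‖y t‖ = ‖(k : ℂ) * y t‖ := by rw [norm_mul, Complex.norm_of_nonneg hk.le]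
      _ ≤ _ := norm_fst_le ((k : ℂ) * y t, Y t)
  have hC : 0 ≤ C := (norm_nonneg _).trans (hV a (left_mem_Icc.2 hab))
  have hgronwall := norm_le_gronwallBound_of_norm_deriv_right_le
    (f := fun t => ((k : ℂ) * y t, Y t)) (δ := ‖Y a‖) (K := k + (C + ‖μ‖) / k) (ε := 0)
    (fun t _ => (hder t).continuousAt.continuousWithinAt)
    (fun t _ => (hder t).hasDerivWithinAt) (by simp [ha, Prod.norm_def]) (fun t ht => by
      have hfst : ‖(k : ℂ) * Y t‖ ≤ k * ‖((k : ℂ) * y t, Y t)‖ := by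
        rw [norm_mul, Complex.norm_of_nonneg hk.le]
        gcongr
        exact norm_snd_le ((k : ℂ) * y t, Y t)
      have hsnd : ‖(V t - μ) * y t‖ ≤ (C + ‖μ‖) / k * ‖((k : ℂ) * y t, Y t)‖ := by
        calc ‖(V t - μ) * y t‖ ≤ (C + ‖μ‖) * ‖y t‖ := by
              rw [norm_mul]
              gcongr
              exact (norm_sub_le _ _).trans (by gcongr; exact hV t (Ico_subset_Icc_self ht))
          _ = (C + ‖μ‖) / k * (k * ‖y t‖) := by field_simp
          _ ≤ _ := by gcongr; exact hnorm t
      rw [add_zero, add_mul]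
      exact (max_le_add_of_nonneg (norm_nonneg _) (norm_nonneg _)).trans
        (add_le_add hfst hsnd)) b (right_mem_Icc.2 hab)
  rw [gronwallBound_ε0] at hgronwall
  exact (hnorm b).trans hgronwall

end IsSchrodingerPair

/-- The vector `(Y, w y)` in a frame rotating with angular velocity `w`, in which solutions of the
free equation `y'' = -w² y` are at rest. -/
def rotatingFrame (w a : ℝ) (y Y : ℝ → ℂ) (t : ℝ) : ℂ × ℂ :=
  (Y t * Real.cos (w * (t - a)) + w * y t * Real.sin (w * (t - a)),
    w * y t * Real.cos (w * (t - a)) - Y t * Real.sin (w * (t - a)))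

lemma norm_ofReal_cos_le_one (x : ℝ) : ‖(Real.cos x : ℂ)‖ ≤ 1 :=
  (Complex.norm_real _).trans_le (Real.abs_cos_le_one x)

lemma norm_ofReal_sin_le_one (x : ℝ) : ‖(Real.sin x : ℂ)‖ ≤ 1 :=
  (Complex.norm_real _).trans_le (Real.abs_sin_le_one x)

lemma norm_mul_sub_sin_le_two_mul_norm_rotatingFrame_sub (w a : ℝ) (y Y : ℝ → ℂ) (t : ℝ) :
    ‖w * y t - Real.sin (w * (t - a))‖ ≤ 2 * ‖rotatingFrame w a y Y t - (1, 0)‖ := by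
  set P := rotatingFrame w a y Y t - (1, 0) with hP
  have hpyth : (Real.cos (w * (t - a)) : ℂ) ^ 2 + (Real.sin (w * (t - a)) : ℂ) ^ 2 = 1 := by
    exact_mod_cast Real.cos_sq_add_sin_sq (w * (t - a))
  have hsplit : w * y t - Real.sin (w * (t - a)) =
      P.1 * Real.sin (w * (t - a)) + P.2 * Real.cos (w * (t - a)) := by
    simp only [hP, rotatingFrame, Prod.fst_sub, Prod.snd_sub]
    linear_combination -w * y t * hpyth
  rw [hsplit, two_mul]
  refine norm_add_le_of_le ?_ ?_ <;> rw [norm_mul]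
  · exact (mul_le_of_le_one_right (norm_nonneg _) (norm_ofReal_sin_le_one _)).trans (norm_fst_le P)
  · exact (mul_le_of_le_one_right (norm_nonneg _) (norm_ofReal_cos_le_one _)).trans (norm_snd_le P)

namespace IsSchrodingerPair

variable {V : ℝ → ℂ} {μ : ℂ} {y Y : ℝ → ℂ} {a b C : ℝ}

lemma hasDerivAt_rotatingFrame (h : IsSchrodingerPair V μ y Y) (w a t : ℝ) :
    HasDerivAt (rotatingFrame w a y Y) ((V t - μ + w ^ 2) * y t * Real.cos (w * (t - a)),
      -((V t - μ + w ^ 2) * y t * Real.sin (w * (t - a)))) t := by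
  have hphase : HasDerivAt (fun t => w * (t - a)) w t :=
    (((hasDerivAt_id t).sub_const a).const_mul w).congr_deriv (mul_one w)
  have hcos := hphase.cos.ofReal_comp
  have hsin := hphase.sin.ofReal_comp
  have hwy := (h.hasDerivAt t).const_mul (w : ℂ)
  refine HasDerivAt.prodMk ?_ ?_
  · exact (((h.hasDerivAt_deriv t).mul hcos).add (hwy.mul hsin)).congr_deriv (by push_cast; ring)
  · exact ((hwy.mul hcos).sub ((h.hasDerivAt_deriv t).mul hsin)).congr_deriv (by push_cast; ring)

lemma norm_mul_sub_sin_le (h : IsSchrodingerPair V μ y Y) {w : ℝ} (hw : 0 < w) (hC : 0 < C)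
    (hV : ∀ t ∈ Icc a b, ‖V t - μ + w ^ 2‖ ≤ C) (ha : y a = 0) (hY : Y a = 1) {t : ℝ}
    (ht : t ∈ Icc a b) :
    ‖w * y t - Real.sin (w * (t - a))‖ ≤ Real.exp (2 * C / w * (t - a)) - 1 := by
  set P : ℝ → ℂ × ℂ := fun t => rotatingFrame w a y Y t - (1, 0)
  have hP (t : ℝ) := (h.hasDerivAt_rotatingFrame w a t).sub_const (1, 0)
  have hdist (t : ℝ) : ‖w * y t - Real.sin (w * (t - a))‖ ≤ 2 * ‖P t‖ :=
    norm_mul_sub_sin_le_two_mul_norm_rotatingFrame_sub w a y Y t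
  have hvel : ∀ t ∈ Icc a b, ‖(V t - μ + w ^ 2) * y t‖ ≤ 2 * C / w * ‖P t‖ + C / w := by
    intro t ht
    have hwy : w * ‖y t‖ ≤ 2 * ‖P t‖ + 1 := by
      calc w * ‖y t‖ = ‖(w * y t - Real.sin (w * (t - a))) + Real.sin (w * (t - a))‖ := by
            rw [sub_add_cancel, norm_mul, Complex.norm_of_nonneg hw.le]
        _ ≤ 2 * ‖P t‖ + 1 := norm_add_le_of_le (hdist t) (norm_ofReal_sin_le_one _)
    calc ‖(V t - μ + w ^ 2) * y t‖ ≤ C * ‖y t‖ := by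
          rw [norm_mul]
          gcongr
          exact hV t ht
      _ = C / w * (w * ‖y t‖) := by field_simp
      _ ≤ C / w * (2 * ‖P t‖ + 1) := by gcongr
      _ = _ := by ring
  have hgronwall := norm_le_gronwallBound_of_norm_deriv_right_le (f := P) (δ := 0)
    (K := 2 * C / w) (ε := C / w) (fun t _ => (hP t).continuousAt.continuousWithinAt)
    (fun t _ => (hP t).hasDerivWithinAt) (by simp [P, rotatingFrame, ha, hY]) (fun t ht => by
      refine le_trans ?_ (hvel t (Ico_subset_Icc_self ht))
      simp only [Prod.norm_def, norm_neg]
      refine max_le ?_ ?_ <;> rw [norm_mul]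
      · exact mul_le_of_le_one_right (norm_nonneg _) (norm_ofReal_cos_le_one _)
      · exact mul_le_of_le_one_right (norm_nonneg _) (norm_ofReal_sin_le_one _)) t ht
  rw [gronwallBound_of_K_ne_0 (by positivity)] at hgronwall
  refine (hdist t).trans ((mul_le_mul_of_nonneg_left hgronwall zero_le_two).trans_eq ?_)
  field_simp
  ring

lemma integral_mul_conj_neg_eq_zero (h : IsSchrodingerPair V μ y Y)
    (hV : ∀ t, V (-t) = conj (V t)) {s : ℝ} (hl : y (-s) = 0) (hr : y s = 0) (hμ : μ.im ≠ 0) :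
    ∫ t in (-s)..s, y t * conj (y (-t)) = 0 := by
  have hy (t : ℝ) : HasDerivAt (fun t => conj (y (-t))) (-conj (Y (-t))) t :=
    ((h.hasDerivAt (-t)).scomp t (hasDerivAt_neg t)).star.congr_deriv (by simp)
  have hY (t : ℝ) : HasDerivAt (fun t => conj (Y (-t)))
      (-((V t - conj μ) * conj (y (-t)))) t :=
    ((h.hasDerivAt_deriv (-t)).scomp t (hasDerivAt_neg t)).star.congr_deriv (by simp [hV])
  have hder (t : ℝ) : HasDerivAt (fun t => Y t * conj (y (-t)) + y t * conj (Y (-t)))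
      ((conj μ - μ) * (y t * conj (y (-t)))) t :=
    (((h.hasDerivAt_deriv t).mul (hy t)).add ((h.hasDerivAt t).mul (hY t))).congr_deriv (by ring)
  have hcont := h.continuous
  have hint := intervalIntegral.integral_eq_sub_of_hasDerivAt (a := -s) (b := s)
    (fun t _ => hder t) (Continuous.intervalIntegrable (by fun_prop) _ _)
  rw [intervalIntegral.integral_const_mul] at hint
  refine (mul_eq_zero.1 (hint.trans (by simp [hl, hr]))).resolve_left fun heq => hμ ?_
  exact Complex.conj_eq_iff_im.1 (sub_eq_zero.1 heq)

end IsSchrodingerPair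

lemma integral_sin_mul_sin_reflected {w : ℝ} (hw : w ≠ 0) (s : ℝ) :
    ∫ t in (-s)..s, Real.sin (w * (t + s)) * Real.sin (w * (-t + s)) =
      Real.sin (2 * w * s) / (2 * w) - s * Real.cos (2 * w * s) := by
  have hder (t : ℝ) : HasDerivAt
      (fun t => Real.sin (2 * w * t) / (4 * w) - Real.cos (2 * w * s) / 2 * t)
      (Real.sin (w * (t + s)) * Real.sin (w * (-t + s))) t := by
    have hsin := (((hasDerivAt_id t).const_mul (2 * w)).sin.div_const (4 * w)).sub
      ((hasDerivAt_id t).const_mul (Real.cos (2 * w * s) / 2))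
    refine hsin.congr_deriv ?_
    have hsub : 2 * w * t = w * (t + s) - w * (-t + s) := by ring
    have hadd : 2 * w * s = w * (t + s) + w * (-t + s) := by ring
    simp only [id_eq]
    rw [hsub, hadd, Real.cos_sub, Real.cos_add]
    field_simp
    ring
  rw [intervalIntegral.integral_eq_sub_of_hasDerivAt (fun t _ => hder t)
    (Continuous.intervalIntegrable (by fun_prop) _ _), mul_neg, Real.sin_neg]
  field_simp
  ring

lemma one_le_abs_sin_add_abs_cos (x : ℝ) : 1 ≤ |Real.sin x| + |Real.cos x| := by
  nlinarith [Real.sin_sq_add_cos_sq x, sq_abs (Real.sin x), sq_abs (Real.cos x),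
    abs_nonneg (Real.sin x), abs_nonneg (Real.cos x)]

lemma norm_mul_conj_sub_mul_le {a b : ℂ} {p q δ : ℝ} (ha : ‖a - p‖ ≤ δ) (hb : ‖b - q‖ ≤ δ)
    (hp : |p| ≤ 1) (hq : |q| ≤ 1) : ‖a * conj b - (p * q : ℝ)‖ ≤ (2 + δ) * δ := by
  have hb' : ‖conj b - q‖ ≤ δ := by
    rwa [← Complex.conj_ofReal q, ← map_sub, Complex.norm_conj]
  have hsplit : a * conj b - (p * q : ℝ) =
      (a - p) * (conj b - q) + ((a - p) * q + p * (conj b - q)) := by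
    push_cast
    ring
  have hprod : ‖(a - p) * (conj b - q)‖ ≤ δ * δ := norm_mul_le_of_le ha hb'
  have hleft : ‖(a - p) * q‖ ≤ δ * 1 := norm_mul_le_of_le ha (by simpa using hq)
  have hright : ‖p * (conj b - q)‖ ≤ 1 * δ := norm_mul_le_of_le (by simpa using hp) hb'
  rw [hsplit]
  linarith [norm_add_le_of_le hprod (norm_add_le_of_le hleft hright)]

namespace IsSchrodingerPair

variable {V : ℝ → ℂ} {μ : ℂ} {y Y : ℝ → ℂ} {s w δ : ℝ}

lemma abs_sin_div_sub_mul_cos_le (h : IsSchrodingerPair V μ y Y)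
    (hV : ∀ t, V (-t) = conj (V t)) (hs : 0 ≤ s) (hw : 0 < w) (hl : y (-s) = 0) (hr : y s = 0)
    (hμ : μ.im ≠ 0) (hδ : ∀ t ∈ Icc (-s) s, ‖w * y t - Real.sin (w * (t + s))‖ ≤ δ) :
    |Real.sin (2 * w * s) / (2 * w) - s * Real.cos (2 * w * s)| ≤ (2 + δ) * δ * (2 * s) := by
  have hcont := h.continuous
  have hzero : ∫ t in (-s)..s, w * y t * conj (w * y (-t)) = 0 := by
    have heq (t : ℝ) : w * y t * conj (w * y (-t)) = (w : ℂ) ^ 2 * (y t * conj (y (-t))) := by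
      rw [map_mul, Complex.conj_ofReal]
      ring
    simp only [heq]
    rw [intervalIntegral.integral_const_mul, h.integral_mul_conj_neg_eq_zero hV hl hr hμ, mul_zero]
  have hdiff : ∫ t in (-s)..s, (w * y t * conj (w * y (-t)) -
      (Real.sin (w * (t + s)) * Real.sin (w * (-t + s)) : ℝ)) =
      (-(Real.sin (2 * w * s) / (2 * w) - s * Real.cos (2 * w * s)) : ℝ) := by
    rw [intervalIntegral.integral_sub (Continuous.intervalIntegrable (by fun_prop) _ _)
      (Continuous.intervalIntegrable (by fun_prop) _ _), hzero, intervalIntegral.integral_ofReal,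
      integral_sin_mul_sin_reflected hw.ne', zero_sub, Complex.ofReal_neg]
  have hbound := intervalIntegral.norm_integral_le_of_norm_le_const fun t ht =>
    have ht : t ∈ Icc (-s) s := Ioc_subset_Icc_self (uIoc_of_le (neg_le_self hs) ▸ ht)
    norm_mul_conj_sub_mul_le (hδ t ht) (hδ (-t) ⟨neg_le_neg ht.2, neg_le.1 ht.1⟩)
      (Real.abs_sin_le_one _) (Real.abs_sin_le_one _)
  rwa [hdiff, Complex.norm_real, norm_neg, Real.norm_eq_abs, sub_neg_eq_add, ← two_mul,
    abs_of_nonneg (by positivity : 0 ≤ 2 * s)] at hbound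

/-- The Dirichlet condition at `s` and the orthogonality of `y` to its reflection pass to the sine
up to `O(δ)`. The first makes `sin (2 w s)` small, and then the second makes `cos (2 w s)` small. -/
lemma one_le_of_norm_mul_sub_sin_le (h : IsSchrodingerPair V μ y Y)
    (hV : ∀ t, V (-t) = conj (V t)) (hs : 0 < s) (hw : 0 < w) (hl : y (-s) = 0) (hr : y s = 0)
    (hμ : μ.im ≠ 0) (hδ : ∀ t ∈ Icc (-s) s, ‖w * y t - Real.sin (w * (t + s))‖ ≤ δ) :
    1 ≤ (5 + 2 * δ + 1 / (2 * w * s)) * δ := by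
  have hsin : |Real.sin (2 * w * s)| ≤ δ := by
    have := hδ s (right_mem_Icc.2 (by linarith))
    rwa [hr, mul_zero, zero_sub, norm_neg, Complex.norm_real, Real.norm_eq_abs, ← two_mul,
      ← mul_assoc, mul_comm w] at this
  have hcos : |Real.cos (2 * w * s)| ≤ (2 + δ) * δ * 2 + δ / (2 * w * s) := by
    refine le_of_mul_le_mul_left ?_ hs
    calc s * |Real.cos (2 * w * s)| = |s * Real.cos (2 * w * s)| := by rw [abs_mul, abs_of_pos hs]
      _ ≤ |Real.sin (2 * w * s) / (2 * w)| +
          |Real.sin (2 * w * s) / (2 * w) - s * Real.cos (2 * w * s)| := by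
        simpa using abs_sub (Real.sin (2 * w * s) / (2 * w))
          (Real.sin (2 * w * s) / (2 * w) - s * Real.cos (2 * w * s))
      _ ≤ δ / (2 * w) + (2 + δ) * δ * (2 * s) := by
        refine add_le_add ?_ (h.abs_sin_div_sub_mul_cos_le hV hs.le hw hl hr hμ hδ)
        rw [abs_div, abs_of_pos (by positivity : 0 < 2 * w)]
        gcongr
      _ = s * ((2 + δ) * δ * 2 + δ / (2 * w * s)) := by
        field_simp
        ring
  calc 1 ≤ |Real.sin (2 * w * s)| + |Real.cos (2 * w * s)| := one_le_abs_sin_add_abs_cos _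
    _ ≤ δ + ((2 + δ) * δ * 2 + δ / (2 * w * s)) := add_le_add hsin hcos
    _ = (5 + 2 * δ + 1 / (2 * w * s)) * δ := by ring

lemma one_le_of_exp_sub_one_le (h : IsSchrodingerPair V μ y Y) {C : ℝ}
    (hV : ∀ t, V (-t) = conj (V t)) (hVC : ∀ t ∈ Icc (-s) s, ‖V t‖ ≤ C) (hC : 0 < C) (hs : 0 < s)
    (hw : 0 < w) (hl : y (-s) = 0) (hr : y s = 0) (hY : Y (-s) ≠ 0) (hμ : μ.im ≠ 0)
    (hwμ : w ^ 2 = μ.re) (hδ : Real.exp (8 * C * s / w) - 1 ≤ δ) :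
    1 ≤ (5 + 2 * δ + 1 / (2 * w * s)) * δ := by
  have him : |μ.im| ≤ C := h.abs_im_le_of_dirichlet (by linarith)
    (fun t ht => (Complex.abs_im_le_norm _).trans (hVC t ht)) hl hr hY
  have hVμ : ∀ t ∈ Icc (-s) s, ‖V t - μ + w ^ 2‖ ≤ 2 * C := fun t ht => by
    have hwre : (w : ℂ) ^ 2 = μ - μ.im * I := by
      rw [eq_sub_iff_add_eq, ← Complex.ofReal_pow, hwμ, Complex.re_add_im]
    calc ‖V t - μ + w ^ 2‖ = ‖V t - μ.im * I‖ := by rw [hwre, sub_add_sub_cancel]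
      _ ≤ C + C := norm_sub_le_of_le (hVC t ht) (by simpa using him)
      _ = 2 * C := by ring
  refine (h.const_mul (Y (-s))⁻¹).one_le_of_norm_mul_sub_sin_le hV hs hw (by simp [hl])
    (by simp [hr]) hμ fun t ht => ?_
  have hclose := (h.const_mul (Y (-s))⁻¹).norm_mul_sub_sin_le hw (by positivity) hVμ (by simp [hl])
    (inv_mul_cancel₀ hY) ht
  rw [sub_neg_eq_add] at hclose
  refine hclose.trans (le_trans ?_ hδ)
  have : 2 * (2 * C) / w * (t + s) ≤ 8 * C * s / w := by
    calc 2 * (2 * C) / w * (t + s) ≤ 2 * (2 * C) / w * (s + s) := by gcongr; exact ht.2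
      _ = 8 * C * s / w := by ring
  gcongr

end IsSchrodingerPair

lemma exists_forall_norm_le_of_dirichlet {s₁ S C : ℝ} (hs₁ : 0 < s₁) (hC : 0 < C) :
    ∃ R, ∀ s ∈ Icc s₁ S, ∀ (V : ℝ → ℂ) (μ : ℂ) (y Y : ℝ → ℂ), IsSchrodingerPair V μ y Y →
      (∀ t, V (-t) = conj (V t)) → (∀ t ∈ Icc (-s) s, ‖V t‖ ≤ C) → y (-s) = 0 → y s = 0 →
      Y (-s) ≠ 0 → μ.im ≠ 0 → ‖μ‖ ≤ R := by
  set δ : ℝ → ℝ := fun w => Real.exp (8 * C * S / w) - 1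
  have hinv (c : ℝ) : Tendsto (fun w : ℝ => c / w) atTop (𝓝 0) :=
    tendsto_const_nhds.div_atTop tendsto_id
  have hδ : Tendsto δ atTop (𝓝 0) := by
    simpa using ((Real.continuous_exp.tendsto 0).comp (hinv (8 * C * S))).sub_const 1
  have hlim : Tendsto (fun w => (5 + 2 * δ w + 1 / (2 * s₁) / w) * δ w) atTop (𝓝 0) := by
    simpa using (((hδ.const_mul 2).const_add 5).add (hinv (1 / (2 * s₁)))).mul hδ
  obtain ⟨w₀, hw₀⟩ := eventually_atTop.1 (hlim.eventually_lt_const one_pos)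
  refine ⟨C + w₀ ^ 2 + C, fun s hs V μ y Y h hV hVC hl hr hY hμ => ?_⟩
  have hs0 : 0 < s := hs₁.trans_le hs.1
  have him : |μ.im| ≤ C := h.abs_im_le_of_dirichlet (by linarith)
    (fun t ht => (Complex.abs_im_le_norm _).trans (hVC t ht)) hl hr hY
  have hlow : -C < μ.re := h.lt_re_of_dirichlet (by linarith)
    (fun t ht => (abs_le.1 ((Complex.abs_re_le_norm _).trans (hVC t ht))).1) hl hr hY
  have hupp : μ.re ≤ w₀ ^ 2 := by
    by_contra! hlt
    have hre : 0 < μ.re := (sq_nonneg w₀).trans_lt hlt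
    set w := √μ.re
    have hw : 0 < w := Real.sqrt_pos.2 hre
    have hδw : Real.exp (8 * C * s / w) - 1 ≤ δ w := by
      have := hs.2
      simp only [δ]
      gcongr
    have hδ0 : 0 ≤ δ w := (sub_nonneg.2 (Real.one_le_exp (by positivity))).trans hδw
    have hone := h.one_le_of_exp_sub_one_le hV hVC hC hs0 hw hl hr hY hμ (Real.sq_sqrt hre.le) hδw
    have hinvs : 1 / (2 * w * s) ≤ 1 / (2 * s₁) / w := by
      rw [div_div, mul_right_comm 2 w s]
      have := hs.1
      gcongr
    refine (hw₀ w (Real.le_sqrt_of_sq_le hlt.le)).not_ge (hone.trans ?_)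
    gcongr
  calc ‖μ‖ ≤ |μ.re| + |μ.im| := Complex.norm_le_abs_re_add_abs_im μ
    _ ≤ (C + w₀ ^ 2) + C := add_le_add (abs_le.2 ⟨by nlinarith, by linarith⟩) him

end SchrodingerEquation

section AiryEquation

/-- `u` solves the Airy equation `u'' = z u` on the plane, encoded as a first-order system for `u`
and its derivative `u₁`. -/
structure IsAirySolution (u u₁ : ℂ → ℂ) : Prop where
  hasDerivAt : ∀ z, HasDerivAt u (u₁ z) z
  hasDerivAt_deriv : ∀ z, HasDerivAt u₁ (z * u z) z

lemma IsAiry.isAirySolution {w : ℂ → ℂ} {a b : ℝ} (h : IsAiry w a b) :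
    IsAirySolution w (deriv w) where
  hasDerivAt z := (h.1 z).hasDerivAt
  hasDerivAt_deriv z := h.2.2.1 z ▸ (h.2.1 z).hasDerivAt

lemma hasDerivAt_add_mul_ofReal (z d : ℂ) (t : ℝ) :
    HasDerivAt (fun t : ℝ => z + d * t) d t := by
  simpa using ((Complex.ofRealCLM.hasDerivAt (x := t)).const_mul d).const_add z

namespace IsAirySolution

variable {u u₁ v v₁ : ℂ → ℂ}

lemma const_mul (hu : IsAirySolution u u₁) (c : ℂ) :
    IsAirySolution (fun z => c * u z) fun z => c * u₁ z where
  hasDerivAt z := (hu.hasDerivAt z).const_mul c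
  hasDerivAt_deriv z := ((hu.hasDerivAt_deriv z).const_mul c).congr_deriv (by ring)

lemma add (hu : IsAirySolution u u₁) (hv : IsAirySolution v v₁) :
    IsAirySolution (fun z => u z + v z) fun z => u₁ z + v₁ z where
  hasDerivAt z := (hu.hasDerivAt z).add (hv.hasDerivAt z)
  hasDerivAt_deriv z := ((hu.hasDerivAt_deriv z).add (hv.hasDerivAt_deriv z)).congr_deriv (by ring)

lemma conj_comp_conj (hu : IsAirySolution u u₁) :
    IsAirySolution (fun z => conj (u (conj z))) fun z => conj (u₁ (conj z)) where
  hasDerivAt z := by simpa [Function.comp_def] using (hu.hasDerivAt (conj z)).conj_conj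
  hasDerivAt_deriv z := by simpa [Function.comp_def] using (hu.hasDerivAt_deriv (conj z)).conj_conj

lemma comp_mul (hu : IsAirySolution u u₁) {ω : ℂ} (hω : ω ^ 3 = 1) :
    IsAirySolution (fun z => u (ω * z)) fun z => ω * u₁ (ω * z) where
  hasDerivAt z := ((hu.hasDerivAt (ω * z)).comp z ((hasDerivAt_id z).const_mul ω)).congr_deriv
    (by ring)
  hasDerivAt_deriv z := by
    refine (((hu.hasDerivAt_deriv (ω * z)).comp z
      ((hasDerivAt_id z).const_mul ω)).const_mul ω).congr_deriv ?_
    linear_combination z * u (ω * z) * hω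

lemma continuous (hu : IsAirySolution u u₁) : Continuous u :=
  continuous_iff_continuousAt.2 fun z => (hu.hasDerivAt z).continuousAt

lemma continuous_deriv (hu : IsAirySolution u u₁) : Continuous u₁ :=
  continuous_iff_continuousAt.2 fun z => (hu.hasDerivAt_deriv z).continuousAt

lemma isSchrodingerPair_line (hu : IsAirySolution u u₁) (z d : ℂ) :
    IsSchrodingerPair (fun t => d ^ 3 * t) (-(d ^ 2 * z)) (fun t => u (z + d * t))
      fun t => d * u₁ (z + d * t) where
  hasDerivAt t :=
    ((hu.hasDerivAt _).comp t (hasDerivAt_add_mul_ofReal z d t)).congr_deriv (by ring)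
  hasDerivAt_deriv t :=
    (((hu.hasDerivAt_deriv _).comp t (hasDerivAt_add_mul_ofReal z d t)).const_mul d).congr_deriv
      (by ring)

lemma isSchrodingerPair_imaginary_line (hu : IsAirySolution u u₁) (z : ℂ) :
    IsSchrodingerPair (fun t => -I * t) z (fun t => u (z + I * t)) fun t => I * u₁ (z + I * t) := by
  simpa [Complex.I_sq, Complex.I_pow_three] using hu.isSchrodingerPair_line z I

lemma eq_zero (hu : IsAirySolution u u₁) (h0 : u 0 = 0) (h1 : u₁ 0 = 0) (z : ℂ) : u z = 0 := by
  have hbound := (hu.isSchrodingerPair_line 0 z).mul_norm_le_mul_exp zero_le_one (C := ‖z‖ ^ 3)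
    (fun t ht => by
      rw [norm_mul, norm_pow, Complex.norm_of_nonneg ht.1]
      exact mul_le_of_le_one_right (by positivity) ht.2) (by simpa using h0) one_pos
  simpa [h1] using hbound

lemma eq_of_apply_zero_eq (hu : IsAirySolution u u₁) (hv : IsAirySolution v v₁) (h0 : u 0 = v 0)
    (h1 : u₁ 0 = v₁ 0) (z : ℂ) : u z = v z := by
  have := (hu.add (hv.const_mul (-1))).eq_zero (by simp [h0]) (by simp [h1]) z
  linear_combination this

lemma deriv_eq_of_apply_zero_eq (hu : IsAirySolution u u₁) (hv : IsAirySolution v v₁)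
    (h0 : u 0 = v 0) (h1 : u₁ 0 = v₁ 0) (z : ℂ) : u₁ z = v₁ z :=
  (hu.hasDerivAt z).unique (funext (hu.eq_of_apply_zero_eq hv h0 h1) ▸ hv.hasDerivAt z)

lemma apply_conj (hu : IsAirySolution u u₁) (h0 : (u 0).im = 0) (h1 : (u₁ 0).im = 0) (z : ℂ) :
    u (conj z) = conj (u z) := by
  have := hu.conj_comp_conj.eq_of_apply_zero_eq hu (by simpa using Complex.conj_eq_iff_im.2 h0)
    (by simpa using Complex.conj_eq_iff_im.2 h1) (conj z)
  rwa [Complex.conj_conj, eq_comm] at this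

lemma apply_mul_eq (hu : IsAirySolution u u₁) {ω : ℂ} (hω : ω ^ 3 = 1) (h1 : u₁ 0 = 0) (z : ℂ) :
    u (ω * z) = u z :=
  (hu.comp_mul hω).eq_of_apply_zero_eq hu (by simp) (by simp [h1]) z

lemma apply_mul_eq_mul (hu : IsAirySolution u u₁) {ω : ℂ} (hω : ω ^ 3 = 1) (h0 : u 0 = 0) (z : ℂ) :
    u (ω * z) = ω * u z :=
  (hu.comp_mul hω).eq_of_apply_zero_eq (hu.const_mul ω) (by simp [h0]) (by simp) z

lemma deriv_apply_mul_eq (hu : IsAirySolution u u₁) {ω : ℂ} (hω : ω ^ 3 = 1) (h0 : u 0 = 0)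
    (z : ℂ) : u₁ (ω * z) = u₁ z := by
  have hω0 : ω ≠ 0 := by
    rintro rfl
    simp at hω
  exact mul_left_cancel₀ hω0
    ((hu.comp_mul hω).deriv_eq_of_apply_zero_eq (hu.const_mul ω) (by simp [h0]) (by simp) z)

lemma wronskian_eq (hu : IsAirySolution u u₁) (hv : IsAirySolution v v₁) (z : ℂ) :
    u z * v₁ z - u₁ z * v z = u 0 * v₁ 0 - u₁ 0 * v 0 := by
  have hder (z : ℂ) : HasDerivAt (fun z => u z * v₁ z - u₁ z * v z) 0 z :=
    (((hu.hasDerivAt z).mul (hv.hasDerivAt_deriv z)).sub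
      ((hu.hasDerivAt_deriv z).mul (hv.hasDerivAt z))).congr_deriv (by ring)
  exact is_const_of_deriv_eq_zero (fun z => (hder z).differentiableAt) (fun z => (hder z).deriv) z 0

end IsAirySolution

/-- The product of `p` and `q` shifted by `s` in opposite imaginary directions. The characteristic
function and all its derivatives are combinations of such products of Airy solutions. -/
def shiftMul (p q : ℂ → ℂ) (s : ℝ) (z : ℂ) : ℂ := p (z + I * s) * q (z - I * s)

section ShiftMul

variable {p q p' q' : ℂ → ℂ}

lemma continuous_shiftMul (hp : Continuous p) (hq : Continuous q) :
    Continuous (Function.uncurry (shiftMul p q)) := by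
  simp only [Function.uncurry_def, shiftMul]
  fun_prop

lemma hasDerivAt_shiftMul (hp : ∀ z, HasDerivAt p (p' z) z) (hq : ∀ z, HasDerivAt q (q' z) z)
    (s : ℝ) (z : ℂ) :
    HasDerivAt (shiftMul p q s) (shiftMul p' q s z + shiftMul p q' s z) z :=
  ((hp _).comp_add_const z (I * s)).mul ((hq _).comp_sub_const z (I * s))

lemma hasDerivAt_shiftMul_param (hp : ∀ z, HasDerivAt p (p' z) z)
    (hq : ∀ z, HasDerivAt q (q' z) z) (s : ℝ) (z : ℂ) :
    HasDerivAt (shiftMul p q · z) (I * (shiftMul p' q s z - shiftMul p q' s z)) s := by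
  have hsub : HasDerivAt (fun t : ℝ => z - I * t) (-I) s := by
    simpa [sub_eq_add_neg] using hasDerivAt_add_mul_ofReal z (-I) s
  refine (((hp _).comp s (hasDerivAt_add_mul_ofReal z I s)).mul
    ((hq _).comp s hsub)).congr_deriv ?_
  simp only [Function.comp_apply, shiftMul]
  ring

lemma shiftMul_conj (hp : ∀ z, p (conj z) = conj (p z)) (hq : ∀ z, q (conj z) = conj (q z))
    (s : ℝ) (z : ℂ) : shiftMul p q s (conj z) = conj (shiftMul q p s z) := by
  have hadd : conj z + I * s = conj (z - I * s) := by simp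
  have hsub : conj z - I * s = conj (z + I * s) := by simp [sub_eq_add_neg]
  rw [shiftMul, shiftMul, hadd, hsub, hp, hq, map_mul, mul_comm]

end ShiftMul

section CharFn

/-- The characteristic function `i (u(z + i s) v(z - i s) - u(z - i s) v(z + i s))` of the Dirichlet
problem for `-y'' - i t y = z y` on `[-s, s]`. The factor `i` makes it real on the real axis. -/
def charFn (u v : ℂ → ℂ) (s : ℝ) (z : ℂ) : ℂ := I * (shiftMul u v s z - shiftMul v u s z)

/-- The derivative of `charFn u v` in `z`. -/
def charFnDeriv (u u₁ v v₁ : ℂ → ℂ) (s : ℝ) (z : ℂ) : ℂ :=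
  I * (shiftMul u₁ v s z + shiftMul u v₁ s z - shiftMul v₁ u s z - shiftMul v u₁ s z)

/-- The second derivative of `charFn u v` in `z`. -/
def charFnDeriv₂ (u u₁ v v₁ : ℂ → ℂ) (s : ℝ) (z : ℂ) : ℂ :=
  2 * z * charFn u v s z + 2 * charFn u₁ v₁ s z

/-- The derivative of `charFn u v` in the parameter `s`. -/
def charFnParamDeriv (u u₁ v v₁ : ℂ → ℂ) (s : ℝ) (z : ℂ) : ℂ :=
  shiftMul u v₁ s z - shiftMul u₁ v s z + shiftMul v₁ u s z - shiftMul v u₁ s z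

variable {u u₁ v v₁ : ℂ → ℂ}

lemma continuous_charFn (hu : Continuous u) (hv : Continuous v) :
    Continuous (Function.uncurry (charFn u v)) :=
  ((continuous_shiftMul hu hv).sub (continuous_shiftMul hv hu)).const_mul I

lemma hasDerivAt_charFn (hu : IsAirySolution u u₁) (hv : IsAirySolution v v₁) (s : ℝ) (z : ℂ) :
    HasDerivAt (charFn u v s) (charFnDeriv u u₁ v v₁ s z) z :=
  (((hasDerivAt_shiftMul hu.hasDerivAt hv.hasDerivAt s z).sub
    (hasDerivAt_shiftMul hv.hasDerivAt hu.hasDerivAt s z)).const_mul I).congr_deriv (by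
      rw [charFnDeriv]
      ring)

lemma hasDerivAt_charFnDeriv (hu : IsAirySolution u u₁) (hv : IsAirySolution v v₁) (s : ℝ)
    (z : ℂ) : HasDerivAt (charFnDeriv u u₁ v v₁ s) (charFnDeriv₂ u u₁ v v₁ s z) z :=
  (((((hasDerivAt_shiftMul hu.hasDerivAt_deriv hv.hasDerivAt s z).add
    (hasDerivAt_shiftMul hu.hasDerivAt hv.hasDerivAt_deriv s z)).sub
    (hasDerivAt_shiftMul hv.hasDerivAt_deriv hu.hasDerivAt s z)).sub
    (hasDerivAt_shiftMul hv.hasDerivAt hu.hasDerivAt_deriv s z)).const_mul I).congr_deriv (by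
      simp only [charFnDeriv₂, charFn, shiftMul]
      ring)

lemma hasDerivAt_charFnDeriv₂ (hu : IsAirySolution u u₁) (hv : IsAirySolution v v₁) (s : ℝ)
    (z : ℂ) : HasDerivAt (charFnDeriv₂ u u₁ v v₁ s) (2 * charFn u v s z +
      4 * z * charFnDeriv u u₁ v v₁ s z - 2 * s * charFnParamDeriv u u₁ v v₁ s z) z := by
  have hcharFn₁ := ((hasDerivAt_shiftMul hu.hasDerivAt_deriv hv.hasDerivAt_deriv s z).sub
    (hasDerivAt_shiftMul hv.hasDerivAt_deriv hu.hasDerivAt_deriv s z)).const_mul I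
  refine ((((hasDerivAt_id z).const_mul 2).mul (hasDerivAt_charFn hu hv s z)).add
    (hcharFn₁.const_mul 2)).congr_deriv ?_
  simp only [charFn, charFnDeriv, charFnParamDeriv, shiftMul, id_eq]
  linear_combination (2 * s * (u (z + I * s) * v₁ (z - I * s) - u₁ (z - I * s) * v (z + I * s) -
    u₁ (z + I * s) * v (z - I * s) + u (z - I * s) * v₁ (z + I * s))) * Complex.I_sq

lemma hasDerivAt_charFn_param (hu : IsAirySolution u u₁) (hv : IsAirySolution v v₁) (s : ℝ)
    (z : ℂ) : HasDerivAt (charFn u v · z) (charFnParamDeriv u u₁ v v₁ s z) s := by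
  refine (((hasDerivAt_shiftMul_param hu.hasDerivAt hv.hasDerivAt s z).sub
    (hasDerivAt_shiftMul_param hv.hasDerivAt hu.hasDerivAt s z)).const_mul I).congr_deriv ?_
  rw [charFnParamDeriv]
  linear_combination (shiftMul u₁ v s z - shiftMul u v₁ s z - shiftMul v₁ u s z +
    shiftMul v u₁ s z) * Complex.I_sq

lemma hasDerivAt_charFnParamDeriv (hu : IsAirySolution u u₁) (hv : IsAirySolution v v₁) (s : ℝ)
    (z : ℂ) : HasDerivAt (charFnParamDeriv u u₁ v v₁ s) (-2 * s * charFn u v s z) z :=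
  ((((hasDerivAt_shiftMul hu.hasDerivAt hv.hasDerivAt_deriv s z).sub
    (hasDerivAt_shiftMul hu.hasDerivAt_deriv hv.hasDerivAt s z)).add
    (hasDerivAt_shiftMul hv.hasDerivAt_deriv hu.hasDerivAt s z)).sub
    (hasDerivAt_shiftMul hv.hasDerivAt hu.hasDerivAt_deriv s z)).congr_deriv (by
      simp only [charFn, shiftMul]
      ring)

lemma isConjInvariantFamily_charFn (hu : IsAirySolution u u₁) (hv : IsAirySolution v v₁)
    (cu : ∀ z, u (conj z) = conj (u z)) (cv : ∀ z, v (conj z) = conj (v z)) :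
    IsConjInvariantFamily (charFn u v) (charFnDeriv u u₁ v v₁) (charFnDeriv₂ u u₁ v v₁)
      (charFnParamDeriv u u₁ v v₁) where
  continuous := continuous_charFn hu.continuous hv.continuous
  continuous_deriv := ((((continuous_shiftMul hu.continuous_deriv hv.continuous).add
    (continuous_shiftMul hu.continuous hv.continuous_deriv)).sub
    (continuous_shiftMul hv.continuous_deriv hu.continuous)).sub
    (continuous_shiftMul hv.continuous hu.continuous_deriv)).const_mul I
  continuous_deriv_deriv :=
    ((continuous_snd.const_mul 2).mul (continuous_charFn hu.continuous hv.continuous)).add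
      ((continuous_charFn hu.continuous_deriv hv.continuous_deriv).const_mul 2)
  continuous_param_deriv := (((continuous_shiftMul hu.continuous hv.continuous_deriv).sub
    (continuous_shiftMul hu.continuous_deriv hv.continuous)).add
    (continuous_shiftMul hv.continuous_deriv hu.continuous)).sub
    (continuous_shiftMul hv.continuous hu.continuous_deriv)
  hasDerivAt := hasDerivAt_charFn hu hv
  hasDerivAt_deriv := hasDerivAt_charFnDeriv hu hv
  hasDerivAt_param := hasDerivAt_charFn_param hu hv
  apply_conj s z := by
    rw [charFn, charFn, shiftMul_conj cu cv, shiftMul_conj cv cu, map_mul, map_sub, Complex.conj_I]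
    ring

lemma exists_isSchrodingerPair_charFn (hu : IsAirySolution u u₁) (hv : IsAirySolution v v₁) (s : ℝ)
    (z : ℂ) : ∃ y Y : ℝ → ℂ, IsSchrodingerPair (fun t => -I * t) z y Y ∧ y (-s) = 0 ∧
      y s = charFn u v s z ∧ Y (-s) = u 0 * v₁ 0 - u₁ 0 * v 0 := by
  refine ⟨_, _, (((hu.isSchrodingerPair_imaginary_line z).const_mul (v (z - I * s))).sub
    ((hv.isSchrodingerPair_imaginary_line z).const_mul (u (z - I * s)))).const_mul I, ?_, ?_, ?_⟩
  · simp only [Complex.ofReal_neg, mul_neg, ← sub_eq_add_neg]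
    ring
  · simp only [charFn, shiftMul]
    ring
  · simp only [Complex.ofReal_neg, mul_neg, ← sub_eq_add_neg]
    rw [← hu.wronskian_eq hv (z - I * s)]
    linear_combination (v (z - I * s) * u₁ (z - I * s) - u (z - I * s) * v₁ (z - I * s)) *
      Complex.I_sq

lemma norm_neg_I_mul_ofReal_le {s t : ℝ} (ht : t ∈ Icc (-s) s) : ‖-I * (t : ℂ)‖ ≤ s := by
  simpa using abs_le.2 ht

lemma isMinimalType_charFn (hu : IsAirySolution u u₁) (hv : IsAirySolution v v₁) {s : ℝ}
    (hs : 0 < s) : IsMinimalType (charFn u v s) := by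
  intro c hc
  set k := 2 * s / c
  have hk : 0 < k := by positivity
  set κ := u 0 * v₁ 0 - u₁ 0 * v 0
  refine Asymptotics.IsBigO.of_bound (‖κ‖ / k * Real.exp (2 * s * k + c * s)) <|
    Eventually.of_forall fun z => ?_
  obtain ⟨y, Y, h, hl, hr, hY⟩ := exists_isSchrodingerPair_charFn hu hv s z
  have hbound := h.mul_norm_le_mul_exp (by linarith) (fun t ht => norm_neg_I_mul_ofReal_le ht) hl hk
  have hexp : (k + (s + ‖z‖) / k) * (s - -s) = 2 * s * k + c * s + c * ‖z‖ := by
    simp only [k]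
    field_simp
    ring
  rw [hr, hY, hexp, Real.exp_add] at hbound
  rw [Real.norm_of_nonneg (Real.exp_nonneg _), div_mul_eq_mul_div, div_mul_eq_mul_div,
    le_div_iff₀' hk]
  exact hbound.trans_eq (mul_assoc _ _ _).symm

lemma re_pos_of_charFn_eq_zero (hu : IsAirySolution u u₁) (hv : IsAirySolution v v₁)
    (hW : u 0 * v₁ 0 - u₁ 0 * v 0 ≠ 0) {s : ℝ} (hs : 0 < s) {z : ℂ} (hz : charFn u v s z = 0) :
    0 < z.re := by
  obtain ⟨y, Y, h, hl, hr, hY⟩ := exists_isSchrodingerPair_charFn hu hv s z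
  exact h.lt_re_of_dirichlet (neg_lt_self hs) (by simp) hl (hr.trans hz) (hY ▸ hW)

lemma exists_forall_norm_le_of_charFn_eq_zero (hu : IsAirySolution u u₁) (hv : IsAirySolution v v₁)
    (hW : u 0 * v₁ 0 - u₁ 0 * v 0 ≠ 0) {s₁ S : ℝ} (hs₁ : 0 < s₁) (hS : s₁ < S) :
    ∃ R, ∀ s ∈ Icc s₁ S, ∀ z, charFn u v s z = 0 → z.im ≠ 0 → ‖z‖ ≤ R := by
  obtain ⟨R, hR⟩ := exists_forall_norm_le_of_dirichlet (S := S) hs₁ (hs₁.trans hS)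
  refine ⟨R, fun s hs z hz him => ?_⟩
  obtain ⟨y, Y, h, hl, hr, hY⟩ := exists_isSchrodingerPair_charFn hu hv s z
  exact hR s hs _ z y Y h (by simp) (fun t ht => (norm_neg_I_mul_ofReal_le ht).trans hs.2) hl
    (hr.trans hz) (hY ▸ hW) him

lemma charFnParamDeriv_ne_zero_of_double_zero (hu : IsAirySolution u u₁)
    (hv : IsAirySolution v v₁) (hW : u 0 * v₁ 0 - u₁ 0 * v 0 ≠ 0) {s : ℝ} {z : ℂ}
    (hz : charFn u v s z = 0) (hz' : charFnDeriv u u₁ v v₁ s z = 0) :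
    charFnParamDeriv u u₁ v v₁ s z ≠ 0 := by
  intro hm
  have hminor : shiftMul u v s z - shiftMul v u s z = 0 := by simpa [charFn] using hz
  have hsum : shiftMul u₁ v s z + shiftMul u v₁ s z - shiftMul v₁ u s z -
      shiftMul v u₁ s z = 0 := by
    simpa [charFnDeriv] using hz'
  have hminor' : shiftMul u v₁ s z - shiftMul v u₁ s z = 0 := by
    rw [charFnParamDeriv] at hm
    linear_combination (hsum + hm) / 2
  have hdet : (shiftMul u v s z - shiftMul v u s z) * (shiftMul u₁ v₁ s z - shiftMul v₁ u₁ s z) -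
      (shiftMul u v₁ s z - shiftMul v u₁ s z) * (shiftMul u₁ v s z - shiftMul v₁ u s z) =
      (u 0 * v₁ 0 - u₁ 0 * v 0) ^ 2 := by
    rw [sq]
    nth_rw 1 [← hu.wronskian_eq hv (z + I * s)]
    rw [← hu.wronskian_eq hv (z - I * s)]
    simp only [shiftMul]
    ring
  rw [hminor, hminor'] at hdet
  exact hW (by simpa using hdet.symm)

theorem hasNonrealZero_charFn_of_double_zero (hu : IsAirySolution u u₁) (hv : IsAirySolution v v₁)
    (cu : ∀ z, u (conj z) = conj (u z)) (cv : ∀ z, v (conj z) = conj (v z))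
    (hW : u 0 * v₁ 0 - u₁ 0 * v 0 ≠ 0) {s₁ S x₁ : ℝ} (hs₁ : 0 < s₁) (hS : s₁ < S)
    (hx₁ : charFn u v s₁ x₁ = 0) (hx₁' : charFnDeriv u u₁ v v₁ s₁ x₁ = 0) :
    HasNonrealZero (charFn u v S) := by
  have hfam := isConjInvariantFamily_charFn hu hv cu cv
  obtain ⟨R, hR⟩ := exists_forall_norm_le_of_charFn_eq_zero hu hv hW hs₁ hS
  refine hfam.hasNonrealZero_of_double_zero hS hR (fun s hs hreal x hx hx' => ?_) hx₁ hx₁'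
  have hs0 : 0 < s := hs₁.trans_le hs.1
  have hLP : IsLaguerrePolya (charFn u v s) := isLaguerrePolya_of_forall_zero_im_eq_zero
    (fun z => (hasDerivAt_charFn hu hv s z).differentiableAt) (isMinimalType_charFn hu hv hs0)
    (hfam.apply_ofReal_im s) hreal
  have hMim := hfam.param_deriv_ofReal_im s x
  have hMre : (charFnParamDeriv u u₁ v v₁ s x).re ≠ 0 := fun hre =>
    charFnParamDeriv_ne_zero_of_double_zero hu hv hW hx hx' (Complex.ext hre hMim)
  have hpos : 0 < x := by simpa using re_pos_of_charFn_eq_zero hu hv hW hs0 hx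
  simpa [hMim] using re_deriv_deriv_mul_re_pos_of_double_zero hLP (hasDerivAt_charFn hu hv s)
    (hasDerivAt_charFnDeriv hu hv s) (hasDerivAt_charFnDeriv₂ hu hv s)
    (hasDerivAt_charFnParamDeriv hu hv s) hs0 hpos hx hx' hMre

lemma charFn_eq_zero_of_mul_eq (u : ℂ → ℂ) (hv : IsAirySolution v v₁) (hv0 : v 0 = 0) {ω : ℂ}
    (hω : ω ^ 3 = 1) {s : ℝ} {z : ℂ} (hz : ω * (z + I * s) = z - I * s)
    (hvz : v (z + I * s) = 0) : charFn u v s z = 0 := by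
  rw [charFn, shiftMul, shiftMul, ← hz, hv.apply_mul_eq_mul hω hv0, hvz]
  ring

lemma charFnDeriv_eq_zero_of_mul_eq (hu : IsAirySolution u u₁) (hv : IsAirySolution v v₁)
    (hu1 : u₁ 0 = 0) (hv0 : v 0 = 0) {ω : ℂ} (hω : ω ^ 3 = 1) {s : ℝ} {z : ℂ}
    (hz : ω * (z + I * s) = z - I * s) (hvz : v (z + I * s) = 0) :
    charFnDeriv u u₁ v v₁ s z = 0 := by
  simp only [charFnDeriv, shiftMul]
  rw [← hz, hu.apply_mul_eq hω hu1, hv.apply_mul_eq_mul hω hv0, hv.deriv_apply_mul_eq hω hv0, hvz]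
  ring

end CharFn

section UplusUminus

variable {Ai Bi : ℂ → ℂ}

lemma IsAiry.apply_conj {w : ℂ → ℂ} {a b : ℝ} (h : IsAiry w a b) (z : ℂ) :
    w (conj z) = conj (w z) := by
  obtain ⟨-, -, -, h0, h1⟩ := id h
  exact h.isAirySolution.apply_conj (by simp [h0]) (by simp [h1]) z

lemma isAirySolution_Uplus (hAi : IsAiryAi Ai) (hBi : IsAiryBi Bi) :
    IsAirySolution (Uplus Ai Bi) fun z => (√3 : ℝ) * deriv Ai z + deriv Bi z :=
  (hAi.isAirySolution.const_mul _).add hBi.isAirySolution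

lemma isAirySolution_Uminus (hAi : IsAiryAi Ai) (hBi : IsAiryBi Bi) :
    IsAirySolution (Uminus Ai Bi) fun z => -(√3 : ℝ) * deriv Ai z + deriv Bi z :=
  (hAi.isAirySolution.const_mul _).add hBi.isAirySolution

lemma Uplus_conj (hAi : IsAiryAi Ai) (hBi : IsAiryBi Bi) (z : ℂ) :
    Uplus Ai Bi (conj z) = conj (Uplus Ai Bi z) := by
  simp [Uplus, hAi.apply_conj, hBi.apply_conj]

lemma Uminus_conj (hAi : IsAiryAi Ai) (hBi : IsAiryBi Bi) (z : ℂ) :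
    Uminus Ai Bi (conj z) = conj (Uminus Ai Bi z) := by
  simp [Uminus, hAi.apply_conj, hBi.apply_conj]

lemma sqrt_three_mul_rpow (a : ℝ) : √3 * (3 : ℝ) ^ a = 3 ^ (1 / 2 + a) := by
  rw [Real.sqrt_eq_rpow, ← Real.rpow_add (by norm_num)]

lemma IsAiryBi.apply_zero_ne_zero (hBi : IsAiryBi Bi) : Bi 0 ≠ 0 := by
  obtain ⟨-, -, -, h0, -⟩ := hBi
  have : 0 < Real.Gamma (2 / 3) := Real.Gamma_pos_of_pos (by norm_num)
  rw [h0, Complex.ofReal_ne_zero]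
  positivity

lemma IsAiryBi.deriv_zero_ne_zero (hBi : IsAiryBi Bi) : deriv Bi 0 ≠ 0 := by
  obtain ⟨-, -, -, -, h1⟩ := hBi
  have : 0 < Real.Gamma (1 / 3) := Real.Gamma_pos_of_pos (by norm_num)
  rw [h1, Complex.ofReal_ne_zero]
  positivity

lemma sqrt_three_mul_Ai_zero (hAi : IsAiryAi Ai) (hBi : IsAiryBi Bi) :
    (√3 : ℝ) * Ai 0 = Bi 0 := by
  obtain ⟨-, -, -, hA, -⟩ := hAi
  obtain ⟨-, -, -, hB, -⟩ := hBi
  rw [hA, hB, ← Complex.ofReal_mul, mul_div_assoc', sqrt_three_mul_rpow]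
  norm_num

lemma sqrt_three_mul_deriv_Ai_zero (hAi : IsAiryAi Ai) (hBi : IsAiryBi Bi) :
    (√3 : ℝ) * deriv Ai 0 = -deriv Bi 0 := by
  obtain ⟨-, -, -, -, hA⟩ := hAi
  obtain ⟨-, -, -, -, hB⟩ := hBi
  rw [hA, hB, ← Complex.ofReal_mul, mul_div_assoc', mul_neg, sqrt_three_mul_rpow]
  norm_num [neg_div]

lemma Uplus_Uminus_wronskian_ne_zero (hAi : IsAiryAi Ai) (hBi : IsAiryBi Bi) :
    Uplus Ai Bi 0 * (-(√3 : ℝ) * deriv Ai 0 + deriv Bi 0) -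
      ((√3 : ℝ) * deriv Ai 0 + deriv Bi 0) * Uminus Ai Bi 0 ≠ 0 := by
  rw [Uplus, neg_mul, sqrt_three_mul_Ai_zero hAi hBi, sqrt_three_mul_deriv_Ai_zero hAi hBi]
  simpa [← two_mul] using And.intro hBi.apply_zero_ne_zero hBi.deriv_zero_ne_zero

lemma exp_neg_two_pi_div_three_pow_three : Complex.exp (-(2 * π / 3 * I)) ^ 3 = 1 := by
  have hmul : ((3 : ℕ) : ℂ) * -(2 * π / 3 * I) = -(2 * π * I) := by
    push_cast
    ring
  rw [← Complex.exp_nat_mul, hmul, Complex.exp_neg, Complex.exp_two_pi_mul_I, inv_one]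

lemma half_add_I_mul_sqrt_three_mul (r : ℝ) :
    ((r / 2 : ℝ) : ℂ) + I * (√3 * r / 2 : ℝ) = r * Complex.exp ((π / 3 : ℝ) * I) := by
  rw [Complex.exp_mul_I, ← Complex.ofReal_cos, ← Complex.ofReal_sin, Real.cos_pi_div_three,
    Real.sin_pi_div_three]
  push_cast
  ring

lemma half_sub_I_mul_sqrt_three_mul (r : ℝ) :
    ((r / 2 : ℝ) : ℂ) - I * (√3 * r / 2 : ℝ) = r * Complex.exp (-((π / 3 : ℝ) * I)) := by
  have := congrArg conj (half_add_I_mul_sqrt_three_mul r)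
  simpa [← Complex.exp_conj, -Complex.ofReal_div, sub_eq_add_neg] using this

lemma rotate_half_add_I_mul_sqrt_three_mul (r : ℝ) :
    Complex.exp (-(2 * π / 3 * I)) * ((r / 2 : ℝ) + I * (√3 * r / 2 : ℝ)) =
      (r / 2 : ℝ) - I * (√3 * r / 2 : ℝ) := by
  rw [half_add_I_mul_sqrt_three_mul, half_sub_I_mul_sqrt_three_mul, mul_left_comm,
    ← Complex.exp_add]
  congr 2
  push_cast
  ring

lemma hasNonrealZero_charFn_Uplus_Uminus (hAi : IsAiryAi Ai) (hBi : IsAiryBi Bi) {α S : ℝ}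
    (hα : α ∈ rayZeroModuli (Uminus Ai Bi)) (hS : √3 * α / 2 < S) :
    HasNonrealZero (charFn (Uplus Ai Bi) (Uminus Ai Bi) S) := by
  obtain ⟨hpos, hzero⟩ := hα
  rw [← half_add_I_mul_sqrt_three_mul] at hzero
  have hplus := isAirySolution_Uplus hAi hBi
  have hminus := isAirySolution_Uminus hAi hBi
  have hplus0 : (√3 : ℝ) * deriv Ai 0 + deriv Bi 0 = 0 := by
    rw [sqrt_three_mul_deriv_Ai_zero hAi hBi, neg_add_cancel]
  have hminus0 : Uminus Ai Bi 0 = 0 := by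
    rw [Uminus, neg_mul, sqrt_three_mul_Ai_zero hAi hBi, neg_add_cancel]
  have hω := exp_neg_two_pi_div_three_pow_three
  have hray := rotate_half_add_I_mul_sqrt_three_mul α
  exact hasNonrealZero_charFn_of_double_zero hplus hminus (Uplus_conj hAi hBi)
    (Uminus_conj hAi hBi) (Uplus_Uminus_wronskian_ne_zero hAi hBi) (by positivity) hS
    (charFn_eq_zero_of_mul_eq _ hminus hminus0 hω hray hzero)
    (charFnDeriv_eq_zero_of_mul_eq hplus hminus hplus0 hminus0 hω hray hzero)

lemma charFn_Uplus_Uminus (Ai Bi : ℂ → ℂ) (ε : ℝ) (lam : ℂ) :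
    charFn (Uplus Ai Bi) (Uminus Ai Bi) (ε ^ ((1 : ℝ) / 3)) ((ε ^ ((1 : ℝ) / 3) : ℝ) * lam) =
      2 * I * (√3 : ℝ) * airyW Ai Bi ε lam := by
  simp only [charFn, shiftMul, Uplus, Uminus, airyW, mul_add, mul_sub, mul_comm I]
  ring

end UplusUminus

end AiryEquation

theorem nonreal_eigenvalue_exists_after_first_collision_general (Ai Bi : ℂ → ℂ)
    (hAi : IsAiryAi Ai) (hBi : IsAiryBi Bi) (α : ℝ) (hα : α ∈ rayZeroModuli (Uminus Ai Bi))
    (ε : ℝ) (hε : (√3 * α / 2) ^ 3 < ε) : ∃ lam : ℂ, lam.im ≠ 0 ∧ airyW Ai Bi ε lam = 0 := by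
  have hα0 : 0 < α := hα.1
  have hε0 : 0 < ε := lt_trans (by positivity) hε
  set S := ε ^ ((1 : ℝ) / 3) with hS_def
  have hS0 : 0 < S := by positivity
  have hS : √3 * α / 2 < S := by
    rwa [hS_def, one_div, Real.lt_rpow_inv_iff_of_pos (by positivity) hε0.le three_pos,
      Real.rpow_ofNat]
  obtain ⟨z, hz, hzero⟩ := hasNonrealZero_charFn_Uplus_Uminus hAi hBi hα hS
  have hscale : (S : ℂ) * (z / S) = z := mul_div_cancel₀ z (Complex.ofReal_ne_zero.2 hS0.ne')
  refine ⟨z / S, by simp [Complex.div_ofReal_im, hz, hS0.ne'], ?_⟩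
  rw [← hscale, charFn_Uplus_Uminus] at hzero
  simpa using hzero

/-- For every `ε > ε₁ = (√3·α₁/2)³` (where `α₁` is the smallest modulus of a zero of `U₋`
on the ray `arg z = π/3`), the model operator `T(ε)` has at least one non-real eigenvalue. -/
theorem nonreal_eigenvalue_exists_after_first_collision (Ai Bi : ℂ → ℂ)
    (hAi : IsAiryAi Ai) (hBi : IsAiryBi Bi)
    (α₁ : ℝ) (hα₁ : IsLeast (rayZeroModuli (Uminus Ai Bi)) α₁)
    (ε : ℝ) (hε : (Real.sqrt 3 * α₁ / 2) ^ 3 < ε) :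
    ∃ lam : ℂ, lam.im ≠ 0 ∧ airyW Ai Bi ε lam = 0 :=
  nonreal_eigenvalue_exists_after_first_collision_general Ai Bi hAi hBi α₁ hα₁.1 ε hε
end
end

section
/- Every zero z of the Airy function Bi lying in the open first quadrant (Re z > 0, Im z > 0) satisfies arg z > π/3; equivalently, cot(arg z) < 1/√3 for every such zero. -/
open Complex MeasureTheory Real

noncomputable section

/-!
On the segment from `0` to `z`, a solution `w` of the Airy equation gives `u t = w (t z)` with
`u'' = t z³ u`. The flux `Im (conj u · u')` has derivative `Im (t z³) |u|²`, hence is nondecreasing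
as long as `0 ≤ arg z ≤ π/3`. For `w` real at the origin the flux starts from the value
`w(0) w'(0) Im z`, which for `Bi` is positive, so `u` cannot vanish at `t = 1`.
-/

section Flux

open ComplexConjugate

variable {u v : ℝ → ℂ} {s : Set ℝ}

lemma hasDerivWithinAt_im_conj_mul {q : ℂ} {t : ℝ}
    (hu : HasDerivWithinAt u (v t) s t) (hv : HasDerivWithinAt v (q * u t) s t) :
    HasDerivWithinAt (fun x => (conj (u x) * v x).im) (q.im * normSq (u t)) s t := by
  have hflux : HasDerivWithinAt (fun x => (conj (u x) * v x).im)
      (conj (v t) * v t + conj (u t) * (q * u t)).im s t :=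
    imCLM.hasFDerivAt.comp_hasDerivWithinAt t (hu.star.mul hv)
  refine hflux.congr_deriv ?_
  rw [mul_left_comm, ← normSq_eq_conj_mul_self, ← normSq_eq_conj_mul_self, add_im, ofReal_im,
    zero_add, im_mul_ofReal]

lemma monotoneOn_im_conj_mul {q : ℝ → ℂ} (hs : Convex ℝ s)
    (hu : ∀ t ∈ s, HasDerivWithinAt u (v t) s t)
    (hv : ∀ t ∈ s, HasDerivWithinAt v (q t * u t) s t)
    (hq : ∀ t ∈ interior s, 0 ≤ (q t).im) :
    MonotoneOn (fun t => (conj (u t) * v t).im) s := by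
  have hderiv (t : ℝ) (ht : t ∈ s) := hasDerivWithinAt_im_conj_mul (hu t ht) (hv t ht)
  exact monotoneOn_of_hasDerivWithinAt_nonneg hs
    (fun t ht => (hderiv t ht).continuousWithinAt)
    (fun t ht => (hderiv t (interior_subset ht)).mono interior_subset)
    (fun t ht => mul_nonneg (hq t ht) (normSq_nonneg _))

end Flux

lemma hasDerivAt_comp_ofReal_mul {f : ℂ → ℂ} {f' z : ℂ} {t : ℝ} (hf : HasDerivAt f f' (t * z)) :
    HasDerivAt (fun x : ℝ => f (x * z)) (z * f') t := by
  have hline : HasDerivAt (fun s : ℂ => s * z) z t := hasDerivAt_mul_const z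
  exact ((hf.comp (t : ℂ) hline).congr_deriv (mul_comm f' z)).comp_ofReal

namespace IsAiry

variable {w : ℂ → ℂ} {w₀ w₀' : ℝ}

lemma hasDerivAt_mul_deriv_comp_ofReal_mul (hw : IsAiry w w₀ w₀') (z : ℂ) (t : ℝ) :
    HasDerivAt (fun x : ℝ => z * deriv w (x * z)) (t * z ^ 3 * w (t * z)) t := by
  refine ((hasDerivAt_comp_ofReal_mul (hw.2.1 _).hasDerivAt).const_mul z).congr_deriv ?_
  rw [hw.2.2.1]
  ring

theorem ne_zero_of_im_pow_three_nonneg (hw : IsAiry w w₀ w₀') (hpos : 0 < w₀ * w₀') {z : ℂ}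
    (him : 0 < z.im) (hz : 0 ≤ (z ^ 3).im) : w z ≠ 0 := by
  intro hwz
  have hmono := monotoneOn_im_conj_mul (q := fun t => t * z ^ 3) (convex_Icc (0 : ℝ) 1)
    (fun t _ => (hasDerivAt_comp_ofReal_mul (hw.1 _).hasDerivAt).hasDerivWithinAt)
    (fun t _ => (hw.hasDerivAt_mul_deriv_comp_ofReal_mul z t).hasDerivWithinAt)
    (fun t ht => by
      rw [im_ofReal_mul]
      exact mul_nonneg (interior_subset ht).1 hz)
  have hle := hmono (Set.left_mem_Icc.2 zero_le_one) (Set.right_mem_Icc.2 zero_le_one) zero_le_one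
  obtain ⟨-, -, -, h0, h0'⟩ := hw
  have hflux : w₀ * (z.im * w₀') ≤ 0 := by simpa [hwz, h0, h0'] using hle
  linarith [mul_pos hpos him]

end IsAiry

lemma im_pow_nonneg_of_mul_arg_le_pi {z : ℂ} {n : ℕ} (him : 0 ≤ z.im) (hn : n * z.arg ≤ π) :
    0 ≤ (z ^ n).im := by
  have hpolar : (z ^ n).im = ‖z‖ ^ n * Real.sin (n * z.arg) := by
    conv_lhs => rw [← norm_mul_exp_arg_mul_I z, mul_pow, ← Complex.exp_nat_mul, ← mul_assoc]
    rw [← ofReal_pow, im_ofReal_mul, ← ofReal_natCast, ← ofReal_mul, exp_ofReal_mul_I_im]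
  rw [hpolar]
  exact mul_nonneg (by positivity) (Real.sin_nonneg_of_nonneg_of_le_pi
    (mul_nonneg n.cast_nonneg (arg_nonneg_iff.2 him)) hn)

theorem IsAiry.pi_div_three_lt_arg {w : ℂ → ℂ} {w₀ w₀' : ℝ} (hw : IsAiry w w₀ w₀')
    (hpos : 0 < w₀ * w₀') {z : ℂ} (hz : w z = 0) (him : 0 < z.im) : π / 3 < z.arg := by
  by_contra! hle
  have hthree : ((3 : ℕ) : ℝ) * z.arg ≤ π := by
    push_cast
    linarith
  exact hw.ne_zero_of_im_pow_three_nonneg hpos him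
    (im_pow_nonneg_of_mul_arg_le_pi him.le hthree) hz

lemma strictAntiOn_cot : StrictAntiOn Real.cot (Set.Ioo 0 π) := by
  intro x hx y hy hxy
  have hsin : 0 < Real.sin (y - x) :=
    Real.sin_pos_of_pos_of_lt_pi (sub_pos.2 hxy) (by linarith [hx.1, hy.2])
  rw [Real.sin_sub] at hsin
  rw [Real.cot_eq_cos_div_sin, Real.cot_eq_cos_div_sin,
    div_lt_div_iff₀ (Real.sin_pos_of_mem_Ioo hy) (Real.sin_pos_of_mem_Ioo hx)]
  linarith

lemma cot_pi_div_three : Real.cot (π / 3) = 1 / √3 := by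
  rw [Real.cot_eq_cos_div_sin, Real.cos_pi_div_three, Real.sin_pi_div_three,
    div_div_div_cancel_right₀ two_ne_zero]

theorem Bi_zero_first_quadrant_arg_general {w : ℂ → ℂ} {w₀ w₀' : ℝ} (hw : IsAiry w w₀ w₀')
    (hpos : 0 < w₀ * w₀') {z : ℂ} (hz : w z = 0) (him : 0 < z.im) :
    π / 3 < z.arg ∧ Real.cos z.arg / Real.sin z.arg < 1 / √3 := by
  have harg : π / 3 < z.arg := hw.pi_div_three_lt_arg hpos hz him
  have hpi : 0 < π / 3 := by positivity
  have harg_lt : z.arg < π := arg_lt_pi_iff.2 (Or.inr him.ne')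
  refine ⟨harg, ?_⟩
  rw [← Real.cot_eq_cos_div_sin, ← cot_pi_div_three]
  exact strictAntiOn_cot ⟨hpi, harg.trans harg_lt⟩ ⟨hpi.trans harg, harg_lt⟩ harg

lemma airyBi_initial_value_mul_slope_pos :
    0 < (3 : ℝ) ^ (-(1 : ℝ) / 6) / Real.Gamma (2 / 3) *
      ((3 : ℝ) ^ ((1 : ℝ) / 6) / Real.Gamma (1 / 3)) := by
  have hGamma : 0 < Real.Gamma (1 / 3) := Real.Gamma_pos_of_pos (by norm_num)
  have hGamma' : 0 < Real.Gamma (2 / 3) := Real.Gamma_pos_of_pos (by norm_num)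
  positivity

/-- Every zero of `Bi` in the open first quadrant satisfies `arg z > π/3`;
equivalently `cot(arg z) < 1/√3`. -/
theorem Bi_zero_first_quadrant_arg (Ai Bi : ℂ → ℂ)
    (hAi : IsAiryAi Ai) (hBi : IsAiryBi Bi)
    (z : ℂ) (hz : Bi z = 0) (hre : 0 < z.re) (him : 0 < z.im) :
    π / 3 < z.arg ∧ Real.cos z.arg / Real.sin z.arg < 1 / Real.sqrt 3 :=
  Bi_zero_first_quadrant_arg_general hBi airyBi_initial_value_mul_slope_pos hz him
end
end
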